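/- arXiv:1006.4393 — 2 statements merged into one kernel-verified Lean document; each statement's English description precedes it below -/
import Mathlib

section
/- Let n ≥ 1 and d ≥ 1 be integers and let b > 0 be an integer. Then there exist uniquely determined integers s and m_s, m_{s+1}, …, m_d, m_{d+1} such that: s ∈ {1, …, d+1}; m_{d+1} ≥ 0; if s ≤ d then n+d−2 ≥ m_d > m_{d−1} > ⋯ > m_s ≥ s; and b = m_{d+1}·C(n−1+d, d) + Σ_{i=s}^{d} C(m_i, i) (where the sum is empty if s = d+1). -/
/-- `IsBinomialExpansion n d b s m` says that the data `(s, m)` constitutes the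
`d`-binomial expansion of `b` relative to `n`:
`b = m_{d+1}·C(n−1+d, d) + Σ_{i=s}^{d} C(m_i, i)` with `1 ≤ s ≤ d+1` and, when
`s ≤ d`, `n+d−2 ≥ m_d > m_{d−1} > ⋯ > m_s ≥ s`. The function `m` is normalized
to vanish at indices outside `{s, …, d+1}`. -/
def IsBinomialExpansion (n d b : ℕ) (s : ℕ) (m : ℕ → ℕ) : Prop :=
  1 ≤ s ∧ s ≤ d + 1 ∧
  (∀ i, i < s → m i = 0) ∧ (∀ i, d + 1 < i → m i = 0) ∧
  (s ≤ d → m d ≤ n + d - 2 ∧ (∀ i, s ≤ i → i < d → m i < m (i + 1)) ∧ s ≤ m s) ∧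
  b = m (d + 1) * Nat.choose (n - 1 + d) d + ∑ i ∈ Finset.Icc s d, Nat.choose (m i) i

/-- The chain condition, without normalization and upper bound. -/
def MacChain (d s : ℕ) (m : ℕ → ℕ) : Prop :=
  1 ≤ s ∧ s ≤ d + 1 ∧
  (s ≤ d → (∀ i, s ≤ i → i < d → m i < m (i + 1)) ∧ s ≤ m s)

lemma MacChain.pred {d s : ℕ} {m : ℕ → ℕ} (h : MacChain (d + 1) s m) (hs : s ≤ d + 1) :
    MacChain d s m ∧ (s ≤ d → m d < m (d + 1)) := by
  obtain ⟨h1, h2, h3⟩ := h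
  obtain ⟨h4, h5⟩ := h3 hs
  refine ⟨⟨h1, hs, fun _ => ⟨fun i hi hi' => h4 i hi (by omega), h5⟩⟩,
    fun h => h4 d h (by omega)⟩

lemma MacChain.le {d s : ℕ} {m : ℕ → ℕ} (h : MacChain d s m) (hs : s ≤ d) : d ≤ m d := by
  induction d with
  | zero => omega
  | succ d ih =>
    obtain ⟨h1, h2⟩ := h.pred hs
    by_cases hsd : s ≤ d
    · have := ih h1 hsd
      have := h2 hsd
      omega
    · have : s = d + 1 := by omega
      subst this
      exact (h.2.2 le_rfl).2

lemma mac_sum_succ {d s : ℕ} (m : ℕ → ℕ) (hs : s ≤ d + 1) :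
    ∑ i ∈ Finset.Icc s (d + 1), Nat.choose (m i) i =
      ∑ i ∈ Finset.Icc s d, Nat.choose (m i) i + Nat.choose (m (d + 1)) (d + 1) :=
  Finset.sum_Icc_succ_top hs _

lemma MacChain.bound {d s : ℕ} {m : ℕ → ℕ} (h : MacChain d s m) {N : ℕ} (hN : d ≤ N)
    (hm : s ≤ d → m d < N) : ∑ i ∈ Finset.Icc s d, Nat.choose (m i) i < Nat.choose N d := by
  induction d generalizing N with
  | zero =>
    have := h.1
    rw [Finset.Icc_eq_empty (by omega)]
    simp
  | succ d ih =>
    by_cases hs : s ≤ d + 1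
    · obtain ⟨h1, h2⟩ := h.pred hs
      have h3 := h.le hs
      have h4 := ih h1 (N := m (d + 1)) (by omega) h2
      rw [mac_sum_succ m hs]
      have h5 := Nat.choose_le_choose (d + 1) (show m (d + 1) + 1 ≤ N from hm hs)
      rw [Nat.choose_succ_succ] at h5
      simp only [Nat.succ_eq_add_one] at h5
      omega
    · rw [Finset.Icc_eq_empty hs]
      simpa using Nat.choose_pos hN

lemma MacChain.unique {d s s' : ℕ} {m m' : ℕ → ℕ} (h : MacChain d s m) (h' : MacChain d s' m')
    (he : ∑ i ∈ Finset.Icc s d, Nat.choose (m i) i = ∑ i ∈ Finset.Icc s' d, Nat.choose (m' i) i) :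
    s = s' ∧ ∀ i, s ≤ i → i ≤ d → m i = m' i := by
  induction d with
  | zero =>
    have := h.1
    have := h.2.1
    have := h'.1
    have := h'.2.1
    exact ⟨by omega, fun i _ _ => by omega⟩
  | succ d ih =>
    have b1 := h.2.1
    have b2 := h'.2.1
    by_cases hs : s ≤ d + 1
    · have h3 := h.le hs
      have p1 := Nat.choose_pos h3
      by_cases hs' : s' ≤ d + 1
      · have h3' := h'.le hs'
        obtain ⟨c, hc⟩ := h.pred hs
        obtain ⟨c', hc'⟩ := h'.pred hs'
        have u := h.bound (N := m (d + 1) + 1) (by omega) (by omega)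
        have u' := h'.bound (N := m' (d + 1) + 1) (by omega) (by omega)
        rw [mac_sum_succ m hs] at u he
        rw [mac_sum_succ m' hs'] at u' he
        have e : m (d + 1) = m' (d + 1) := by
          rcases lt_trichotomy (m (d + 1)) (m' (d + 1)) with l | l | l
          · have := Nat.choose_le_choose (d + 1) (Nat.succ_le_of_lt l)
            simp only [Nat.succ_eq_add_one] at this
            omega
          · exact l
          · have := Nat.choose_le_choose (d + 1) (Nat.succ_le_of_lt l)
            simp only [Nat.succ_eq_add_one] at this
            omega
        rw [e] at he
        obtain ⟨r1, r2⟩ := ih c c' (by omega)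
        refine ⟨r1, fun i hi hi' => ?_⟩
        rcases Nat.lt_or_ge d i with l | l
        · have : i = d + 1 := by omega
          rw [this, e]
        · exact r2 i hi l
      · rw [mac_sum_succ m hs, Finset.Icc_eq_empty hs', Finset.sum_empty] at he
        omega
    · by_cases hs' : s' ≤ d + 1
      · have p1 := Nat.choose_pos (h'.le hs')
        rw [mac_sum_succ m' hs', Finset.Icc_eq_empty hs, Finset.sum_empty] at he
        omega
      · exact ⟨by omega, fun i _ _ => by omega⟩

lemma mac_exists (d N c : ℕ) (hc : c < Nat.choose N d) :
    ∃ s m, MacChain d s m ∧ (s ≤ d → m d < N) ∧ (∀ i, i < s → m i = 0) ∧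
      c = ∑ i ∈ Finset.Icc s d, Nat.choose (m i) i := by
  induction d generalizing N c with
  | zero =>
    refine ⟨1, fun _ => 0, ⟨le_rfl, le_rfl, by omega⟩, by omega, fun _ _ => rfl, ?_⟩
    simpa using hc
  | succ d ih =>
    rcases Nat.eq_zero_or_pos c with h0 | hpos
    · refine ⟨d + 2, fun _ => 0, ⟨by omega, le_rfl, by omega⟩, by omega, fun _ _ => rfl, ?_⟩
      rw [Finset.Icc_eq_empty (by omega)]
      simpa using h0
    · have hex : ∃ k, c < Nat.choose (k + 1) (d + 1) :=
        ⟨N, hc.trans_le (Nat.choose_le_choose _ (Nat.le_succ N))⟩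
      classical
      obtain ⟨k, hk, hmin⟩ : ∃ k, c < Nat.choose (k + 1) (d + 1) ∧
          ∀ j < k, ¬ c < Nat.choose (j + 1) (d + 1) :=
        ⟨Nat.find hex, Nat.find_spec hex, fun j hj => Nat.find_min hex hj⟩
      have hkd : d ≤ k := by
        by_contra hlt
        rw [Nat.choose_eq_zero_of_lt (by omega)] at hk
        omega
      have hle : Nat.choose k (d + 1) ≤ c := by
        rcases k with _ | k
        · simp
        · exact not_lt.mp (hmin k (by omega))
      -- when `k = d`, we would have `c < 1`
      have hkd' : d + 1 ≤ k := by
        by_contra hlt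
        have : k = d := by omega
        subst this
        rw [Nat.choose_self] at hk
        omega
      have hkN : k < N := by
        by_contra hlt
        have := Nat.choose_le_choose (d + 1) (not_lt.mp hlt)
        omega
      rw [Nat.choose_succ_succ] at hk
      simp only [Nat.succ_eq_add_one] at hk
      obtain ⟨s, m, ⟨a1, a2, a3⟩, hb, hz, hsum⟩ := ih k (c - Nat.choose k (d + 1)) (by omega)
      refine ⟨s, fun i => if i = d + 1 then k else m i, ⟨a1, by omega, fun hs => ⟨?_, ?_⟩⟩,
        fun _ => by simpa using hkN, ?_, ?_⟩
      · intro i hi hi'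
        rcases Nat.lt_or_ge i d with l | l
        · have := (a3 (by omega)).1 i hi l
          simpa [show i ≠ d + 1 by omega, show i ≠ d by omega] using this
        · have : i = d := by omega
          subst this
          simpa using hb hi
      · by_cases e : s = d + 1
        · simpa [e] using hkd'
        · simpa [e] using (a3 (by omega)).2
      · intro i hi
        simpa [show i ≠ d + 1 by omega] using hz i hi
      · rw [mac_sum_succ _ a2]
        have : ∑ i ∈ Finset.Icc s d, Nat.choose (if i = d + 1 then k else m i) i =
            ∑ i ∈ Finset.Icc s d, Nat.choose (m i) i := by
          refine Finset.sum_congr rfl fun i hi => ?_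
          rw [Finset.mem_Icc] at hi
          rw [if_neg (by omega)]
        rw [this, ← hsum]
        simp only [if_true]
        omega

/-- existence and uniqueness of the `d`-binomial expansion of a
positive integer `b` relative to `n`. -/
theorem binomialExpansion_existsUnique (n d b : ℕ) (hn : 1 ≤ n) (hd : 1 ≤ d) (hb : 0 < b) :
    ∃! sm : ℕ × (ℕ → ℕ), IsBinomialExpansion n d b sm.1 sm.2 := by
  have hC : 0 < Nat.choose (n - 1 + d) d := Nat.choose_pos (by omega)
  obtain ⟨s, m, ⟨a1, a2, a3⟩, hlt, hz, hsum⟩ :=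
    mac_exists d (n - 1 + d) (b % Nat.choose (n - 1 + d) d) (Nat.mod_lt _ hC)
  have key : ∀ s m, IsBinomialExpansion n d b s m → MacChain d s m ∧
      m (d + 1) = b / Nat.choose (n - 1 + d) d ∧
      ∑ i ∈ Finset.Icc s d, Nat.choose (m i) i = b % Nat.choose (n - 1 + d) d := by
    rintro s m ⟨h1, h2, h3, h4, h5, h6⟩
    have hch : MacChain d s m := ⟨h1, h2, fun h => (h5 h).2⟩
    have hbd := hch.bound (N := n - 1 + d) (by omega) (fun h => by
      have := (h5 h).1
      omega)
    have := (Nat.div_mod_unique (a := b) (d := m (d + 1)) hC).2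
      ⟨by rw [h6, mul_comm, add_comm], hbd⟩
    exact ⟨hch, this.1.symm, this.2.symm⟩
  have hex : ∃ s m, IsBinomialExpansion n d b s m := by
    refine ⟨s, fun i => if i = d + 1 then b / Nat.choose (n - 1 + d) d else
      if d + 1 < i then 0 else m i, a1, a2, ?_, ?_, ?_, ?_⟩
    · intro i hi
      simp [show i ≠ d + 1 by omega, hz i hi]
    · intro i hi
      simp [show i ≠ d + 1 by omega, hi]
    · intro hs
      obtain ⟨c1, c2⟩ := a3 hs
      have := hlt hs
      refine ⟨?_, ?_, ?_⟩
      · simp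
        omega
      · intro i hi hi'
        have := c1 i hi hi'
        simpa [show i ≠ d + 1 by omega, show ¬ d + 1 < i by omega, show i ≠ d by omega,
          show ¬ d < i by omega] using this
      · simpa [show s ≠ d + 1 by omega, show ¬ d + 1 < s by omega] using c2
    · have : ∑ i ∈ Finset.Icc s d, Nat.choose (if i = d + 1 then b / Nat.choose (n - 1 + d) d else
          if d + 1 < i then 0 else m i) i = ∑ i ∈ Finset.Icc s d, Nat.choose (m i) i := by
        refine Finset.sum_congr rfl fun i hi => ?_
        rw [Finset.mem_Icc] at hi
        rw [if_neg (by omega), if_neg (by omega)]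
      rw [this, ← hsum]
      simp only [if_true]
      exact (Nat.div_add_mod' b _).symm
  obtain ⟨s, m, h⟩ := hex
  refine ⟨(s, m), h, ?_⟩
  rintro ⟨s', m'⟩ h'
  simp only at h'
  obtain ⟨k1, k2, k3⟩ := key s m h
  obtain ⟨k1', k2', k3'⟩ := key s' m' h'
  obtain ⟨e, he⟩ := k1'.unique k1 (k3'.trans k3.symm)
  subst e
  have : m' = m := by
    funext i
    rcases Nat.lt_or_ge i s' with l | l
    · rw [h.2.2.1 i l, h'.2.2.1 i l]
    rcases Nat.lt_or_ge d i with l2 | l2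
    · by_cases e : i = d + 1
      · rw [e, k2, k2']
      · rw [h.2.2.2.1 i (by omega), h'.2.2.2.1 i (by omega)]
    · exact he i l l2
  rw [this]
end

section
/- Let K be a field, n ≥ 1, and S = K[x_1,…,x_n] with its standard grading (each x_i of degree 1). For a numerical function h : ℕ → ℕ the following are equivalent: (a) there exists a finitely generated ℕ-graded S-module M = ⊕_{j≥0} M_j (so that S_i · M_j ⊆ M_{i+j} for all i, j) which is generated as an S-module by its degree-zero component M_0 and satisfies dim_K M_j = h(j) for all j ≥ 0; (b) for all integers j ≥ 0, h(j+1) ≤ h(j)^{⟨j⟩}, where the operation b ↦ b^{⟨d⟩} is computed relative to n. -/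
open scoped Classical in
/-- The Macaulay-type operation `b ↦ b^{⟨d⟩}` relative to `n`: if
`b = m_{d+1}·C(n−1+d, d) + Σ_{i=s}^{d} C(m_i, i)` is the `d`-binomial expansion
of `b > 0`, then `b^{⟨d⟩} = m_{d+1}·C(n+d, d+1) + Σ_{i=s}^{d} C(m_i+1, i+1)`;
moreover `0^{⟨d⟩} = 0` and `b^{⟨0⟩} = n·b`. -/
noncomputable def macaulayPow (n d b : ℕ) : ℕ :=
  if b = 0 then 0
  else if d = 0 then n * b
  else if h : ∃ sm : ℕ × (ℕ → ℕ), IsBinomialExpansion n d b sm.1 sm.2 then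
    h.choose.2 (d + 1) * Nat.choose (n + d) (d + 1) +
      ∑ i ∈ Finset.Icc h.choose.1 d, Nat.choose (h.choose.2 i + 1) (i + 1)
  else 0


/-- A monomial `x^e` in the `c`-th component of a free module. -/
@[ext] structure Mono where
  c : ℕ
  e : ℕ →₀ ℕ

namespace Mono

/-- sort key -/
def key (p : Mono) : ℕ ×ₗ Lex (ℕ →₀ ℕ) := toLex (p.c, toLex p.e)

theorem key_injective : Function.Injective key := by
  intro p q h
  have h' : (p.c, toLex p.e) = (q.c, toLex q.e) := toLex.injective h
  ext1
  · exact (Prod.ext_iff.1 h').1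
  · exact toLex.injective (Prod.ext_iff.1 h').2

noncomputable instance : LinearOrder Mono := LinearOrder.lift' key key_injective

theorem lt_iff {p q : Mono} : p < q ↔ p.c < q.c ∨
    p.c = q.c ∧ ∃ i, (∀ j < i, p.e j = q.e j) ∧ p.e i < q.e i := by
  have : p < q ↔ key p < key q := Iff.rfl
  rw [this, key, key, Prod.Lex.toLex_lt_toLex]
  simp only [Finsupp.Lex.lt_iff]
  rfl

/-- multiplication by a variable -/
noncomputable def mul (i : ℕ) (p : Mono) : Mono := ⟨p.c, p.e + Finsupp.single i 1⟩

@[simp] theorem mul_c (i : ℕ) (p : Mono) : (mul i p).c = p.c := rfl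
theorem mul_e (i : ℕ) (p : Mono) : (mul i p).e = p.e + Finsupp.single i 1 := rfl
@[simp] theorem mul_e_apply (i j : ℕ) (p : Mono) :
    (mul i p).e j = p.e j + if i = j then 1 else 0 := by
  simp [mul_e, Finsupp.single_apply]
@[simp] theorem mul_degree (i : ℕ) (p : Mono) : (mul i p).e.degree = p.e.degree + 1 := by
  simp [mul_e]

theorem mul_injective (i : ℕ) : Function.Injective (mul i) := by
  intro p q h
  have h1 : (mul i p).c = (mul i q).c := congrArg (fun x : Mono => x.c) h
  have h2 : p.e + Finsupp.single i 1 = q.e + Finsupp.single i 1 :=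
    congrArg (fun x : Mono => x.e) h
  ext1
  · exact h1
  · exact add_right_cancel h2

theorem mul_comm' (i j : ℕ) (p : Mono) : mul i (mul j p) = mul j (mul i p) := by
  ext1
  · rfl
  · simp only [mul_e]; abel

theorem exists_mul {i : ℕ} {p : Mono} (h : 0 < p.e i) : ∃ q, p = mul i q := by
  refine ⟨⟨p.c, p.e - Finsupp.single i 1⟩, ?_⟩
  ext j
  · rfl
  · simp only [mul_e_apply, Finsupp.tsub_apply, Finsupp.single_apply]
    split_ifs with hij
    · subst hij; omega
    · omega

theorem mul_lt {i : ℕ} {p q : Mono} (h : p < q) : mul i p < mul i q := by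
  rw [lt_iff] at h ⊢
  rcases h with h | ⟨h1, j, h2, h3⟩
  · exact Or.inl h
  · refine Or.inr ⟨h1, j, fun l hl => ?_, ?_⟩
    · simp [h2 l hl]
    · simpa using h3

theorem mul_lt_iff {i : ℕ} {p q : Mono} : mul i p < mul i q ↔ p < q := by
  constructor
  · intro h
    by_contra hn
    rcases (not_lt.1 hn).lt_or_eq with h' | h'
    · exact lt_asymm h (mul_lt h')
    · subst h'; exact lt_irrefl _ h
  · exact mul_lt

theorem mul_le_mul {i j : ℕ} (h : i ≤ j) (p : Mono) : mul j p ≤ mul i p := by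
  rcases h.eq_or_lt with rfl | h
  · exact le_rfl
  · apply le_of_lt
    rw [lt_iff]
    refine Or.inr ⟨rfl, i, fun l hl => ?_, ?_⟩
    · simp [show i ≠ l by omega, show j ≠ l by omega]
    · simp [show j ≠ i by omega]

/-- `w.e` is supported in `[0, j]`. -/
def LastLE (j : ℕ) (w : Mono) : Prop := ∀ i, j < i → w.e i = 0

theorem degree_eq_sum_of (e : ℕ →₀ ℕ) (k : ℕ) (h : ∀ i, k ≤ i → e i = 0) :
    e.degree = ∑ i ∈ Finset.range k, e i := by
  rw [Finsupp.degree_apply]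
  apply Finset.sum_subset
  · intro i hi
    by_contra hn
    simp only [Finset.mem_range, not_lt] at hn
    exact (Finsupp.mem_support_iff.1 hi) (h i hn)
  · intro i _ hi
    simpa using hi

theorem sum_range_le_degree (e : ℕ →₀ ℕ) (k : ℕ) : ∑ i ∈ Finset.range k, e i ≤ e.degree := by
  classical
  rw [Finsupp.degree_apply]
  have : ∑ i ∈ Finset.range k, e i = ∑ i ∈ (Finset.range k).filter (fun i => e i ≠ 0), e i := by
    rw [Finset.sum_filter_ne_zero]
  rw [this]
  apply Finset.sum_le_sum_of_subset
  intro i hi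
  simp at hi ⊢
  exact hi.2

/-- key lexicographic fact -/
theorem mul_le_of_lt {w v : Mono} {j : ℕ} (hw : LastLE j w) (hd : w.e.degree = v.e.degree)
    (h : w < v) (m : ℕ) : mul j w ≤ mul m v := by
  apply le_of_lt
  rw [lt_iff] at h ⊢
  rcases h with h | ⟨h1, i, h2, h3⟩
  · exact Or.inl h
  · have hij : i < j := by
      by_contra hn
      have e1 : w.e.degree = ∑ l ∈ Finset.range (i+1), w.e l :=
        degree_eq_sum_of _ _ (fun l hl => hw l (by omega))
      have e2 := sum_range_le_degree v.e (i+1)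
      have e3 : ∑ l ∈ Finset.range (i+1), w.e l < ∑ l ∈ Finset.range (i+1), v.e l := by
        rw [Finset.sum_range_succ, Finset.sum_range_succ,
          Finset.sum_congr rfl (fun l hl => h2 l (Finset.mem_range.1 hl))]
        exact Nat.add_lt_add_left h3 _
      omega
    refine Or.inr ⟨h1, ?_⟩
    by_cases hm : m < i
    · refine ⟨m, fun l hl => ?_, ?_⟩
      · simp [h2 l (by omega), show j ≠ l by omega, show m ≠ l by omega]
      · simp [h2 m hm, show j ≠ m by omega]
    · refine ⟨i, fun l hl => ?_, ?_⟩
      · simp [h2 l hl, show j ≠ l by omega, show m ≠ l by omega]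
      · simp [show j ≠ i by omega]; omega

theorem exists_last {u : Mono} {k : ℕ} (hk : ∀ i, k ≤ i → u.e i = 0) (hd : u.e.degree ≠ 0) :
    ∃ j w, j < k ∧ u = mul j w ∧ LastLE j w := by
  have hne : u.e.support.Nonempty := by
    rw [Finset.nonempty_iff_ne_empty]
    intro h
    rw [Finsupp.support_eq_empty] at h
    rw [h] at hd
    simp at hd
  have hj := u.e.support.max'_mem hne
  set j := u.e.support.max' hne with hjd
  obtain ⟨w, hw⟩ := exists_mul (i := j) (p := u) (by
    have := Finsupp.mem_support_iff.1 hj; omega)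
  refine ⟨j, w, ?_, hw, ?_⟩
  · by_contra hn
    exact (Finsupp.mem_support_iff.1 hj) (hk j (by omega))
  · intro i hi
    have : u.e i = 0 := by
      by_contra hn
      have := u.e.support.le_max' i (Finsupp.mem_support_iff.2 hn)
      omega
    rw [hw] at this
    simp at this
    exact this.1

/-- Monomials of degree `d` in the first `k` variables, components `< r`. -/
noncomputable def X (r k d : ℕ) : Finset Mono :=
  ((Finset.range r) ×ˢ (Finset.finsuppAntidiag (Finset.range k) d)).map
    ⟨fun x => ⟨x.1, x.2⟩, fun x y h => by
      have h1 := congrArg Mono.c h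
      have h2 := congrArg Mono.e h
      exact Prod.ext h1 h2⟩

theorem mem_X {r k d : ℕ} {p : Mono} :
    p ∈ X r k d ↔ p.c < r ∧ (∀ i, k ≤ i → p.e i = 0) ∧ p.e.degree = d := by
  simp only [X, Finset.mem_map, Finset.mem_product, Finset.mem_range,
    Finset.mem_finsuppAntidiag', Function.Embedding.coeFn_mk, Prod.exists]
  have hs : p.e.support ⊆ Finset.range k ↔ ∀ i, k ≤ i → p.e i = 0 := by
    constructor
    · intro h i hi
      by_contra hn
      have := h (Finsupp.mem_support_iff.2 hn)
      simp at this; omega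
    · intro h i hi
      simp only [Finset.mem_range]
      by_contra hn
      exact (Finsupp.mem_support_iff.1 hi) (h i (by omega))
  constructor
  · rintro ⟨c, e, ⟨h1, h2, h3⟩, rfl⟩
    exact ⟨h1, hs.1 h3, h2⟩
  · rintro ⟨h1, h2, h3⟩
    exact ⟨p.c, p.e, ⟨h1, h3, hs.2 h2⟩, rfl⟩

theorem mul_mem_X {r k d i : ℕ} {p : Mono} (hi : i < k) : mul i p ∈ X r k (d+1) ↔ p ∈ X r k d := by
  rw [mem_X, mem_X]
  simp only [mul_c, mul_e_apply, mul_degree, add_left_inj]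
  refine and_congr Iff.rfl (and_congr ?_ Iff.rfl)
  refine forall_congr' fun j => forall_congr' fun hj => ?_
  simp [show i ≠ j by omega]

/-- initial segment -/
def Init (Z Y : Finset Mono) : Prop := Y ⊆ Z ∧ ∀ y ∈ Y, ∀ x ∈ Z, x < y → x ∈ Y

theorem Init.le {Z Y : Finset Mono} (h : Init Z Y) {x y : Mono} (hy : y ∈ Y) (hx : x ∈ Z)
    (hxy : x ≤ y) : x ∈ Y := by
  rcases hxy.eq_or_lt with rfl | h'
  · exact hy
  · exact h.2 y hy x hx h'

theorem exists_init (Z : Finset Mono) : ∀ b ≤ Z.card, ∃ Y, Init Z Y ∧ Y.card = b := by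
  induction Z using Finset.induction_on_max with
  | empty => intro b hb; exact ⟨∅, ⟨by simp, by simp⟩, by simp at hb; simp [hb]⟩
  | insert a s ha ih =>
    intro b hb
    have hna : a ∉ s := fun h => lt_irrefl _ (ha a h)
    rw [Finset.card_insert_of_notMem hna] at hb
    rcases Nat.lt_or_ge s.card b with hlt | hge
    · refine ⟨insert a s, ⟨le_rfl, fun _ _ x hx _ => hx⟩, ?_⟩
      rw [Finset.card_insert_of_notMem hna]; omega
    · obtain ⟨Y, hY, hc⟩ := ih b hge
      refine ⟨Y, ⟨hY.1.trans (Finset.subset_insert _ _), ?_⟩, hc⟩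
      intro y hy x hx hxy
      rcases Finset.mem_insert.1 hx with rfl | hx
      · exact absurd hxy (lt_asymm (ha y (hY.1 hy)))
      · exact hY.2 y hy x hx hxy

theorem Init.subset_of_card_le {Z Y Y' : Finset Mono} (h : Init Z Y) (h' : Init Z Y')
    (hc : Y.card ≤ Y'.card) : Y ⊆ Y' := by
  intro y hy
  by_contra hn
  have : Y' ⊆ Y := by
    intro z hz
    apply h.le hy (h'.1 hz)
    by_contra hlt
    exact hn (h'.2 z hz y (h.1 hy) (not_le.1 hlt))
  have heq := Finset.eq_of_subset_of_card_le this hc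
  exact hn (heq ▸ hy)

open Classical in
/-- elements not divisible by the variable `k` -/
noncomputable def free (k : ℕ) (A : Finset Mono) : Finset Mono := A.filter (fun p => p.e k = 0)

/-- quotients by the variable `k` -/
noncomputable def quo (k : ℕ) (A : Finset Mono) : Finset Mono :=
  A.preimage (mul k) (mul_injective k).injOn

theorem mem_free {k : ℕ} {A : Finset Mono} {p : Mono} : p ∈ free k A ↔ p ∈ A ∧ p.e k = 0 := by
  simp [free]
theorem mem_quo {k : ℕ} {A : Finset Mono} {p : Mono} : p ∈ quo k A ↔ mul k p ∈ A := by
  simp [quo]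

theorem card_free_add_card_quo (k : ℕ) (A : Finset Mono) :
    (free k A).card + (quo k A).card = A.card := by
  classical
  have h1 : ((quo k A).map ⟨mul k, mul_injective k⟩) = A.filter (fun p => ¬ p.e k = 0) := by
    ext p
    simp only [Finset.mem_map, mem_quo, Function.Embedding.coeFn_mk, Finset.mem_filter]
    constructor
    · rintro ⟨q, hq, rfl⟩
      exact ⟨hq, by simp⟩
    · rintro ⟨hp, hk⟩
      obtain ⟨q, rfl⟩ := exists_mul (Nat.pos_of_ne_zero hk)
      exact ⟨q, hp, rfl⟩
  rw [← Finset.card_map (s := quo k A) ⟨mul k, mul_injective k⟩, h1]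
  unfold free
  convert Finset.card_filter_add_card_filter_not (s := A) (fun p => p.e k = 0)

theorem free_X {r k d : ℕ} {p : Mono} : p ∈ X r k d ↔ p ∈ X r (k+1) d ∧ p.e k = 0 := by
  simp only [mem_X]
  constructor
  · rintro ⟨h1, h2, h3⟩
    exact ⟨⟨h1, fun i hi => h2 i (by omega), h3⟩, h2 k le_rfl⟩
  · rintro ⟨⟨h1, h2, h3⟩, h4⟩
    refine ⟨h1, fun i hi => ?_, h3⟩
    rcases hi.eq_or_lt with rfl | hi
    · exact h4
    · exact h2 i hi

theorem free_subset {r k d : ℕ} {A : Finset Mono} (hA : A ⊆ X r (k+1) d) : free k A ⊆ X r k d := by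
  intro p hp
  rw [mem_free] at hp
  exact free_X.2 ⟨hA hp.1, hp.2⟩

theorem quo_subset {r k d : ℕ} {A : Finset Mono} (hA : A ⊆ X r (k+1) (d+1)) :
    quo k A ⊆ X r (k+1) d := by
  intro p hp
  rw [mem_quo] at hp
  exact (mul_mem_X (Nat.lt_succ_self k)).1 (hA hp)

theorem Init.free {r k d : ℕ} {L : Finset Mono} (hL : Init (X r (k+1) d) L) :
    Init (X r k d) (free k L) := by
  refine ⟨free_subset hL.1, fun y hy x hx hxy => ?_⟩
  rw [mem_free] at hy ⊢
  have := free_X.1 hx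
  exact ⟨hL.2 y hy.1 x this.1 hxy, this.2⟩

theorem Init.quo {r k d : ℕ} {L : Finset Mono} (hL : Init (X r (k+1) (d+1)) L) :
    Init (X r (k+1) d) (quo k L) := by
  refine ⟨quo_subset hL.1, fun y hy x hx hxy => ?_⟩
  rw [mem_quo] at hy ⊢
  exact hL.2 _ hy _ ((mul_mem_X (Nat.lt_succ_self k)).2 hx) (mul_lt hxy)

/-- stability -/
def Stable (k : ℕ) (A : Finset Mono) : Prop :=
  ∀ q i, i + 1 < k → mul i q ∈ A → mul (i+1) q ∈ A

theorem Stable.free {k : ℕ} {A : Finset Mono} (h : Stable (k+1) A) : Stable k (free k A) := by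
  intro q i hi hq
  rw [mem_free] at hq ⊢
  refine ⟨h q i (by omega) hq.1, ?_⟩
  have := hq.2
  simp at this
  simp [this, show i + 1 ≠ k by omega]

theorem Stable.quo {k : ℕ} {A : Finset Mono} (h : Stable (k+1) A) : Stable (k+1) (quo k A) := by
  intro q i hi hq
  rw [mem_quo] at hq ⊢
  rw [mul_comm'] at hq ⊢
  exact h _ i hi hq

/-- Combinatorial version of Green's hyperplane restriction theorem. -/
theorem green (r : ℕ) : ∀ k d (A L : Finset Mono), A ⊆ X r (k+1) d → Stable (k+1) A →
    Init (X r (k+1) d) L → L.card = A.card → (free k A).card ≤ (free k L).card := by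
  intro k
  induction k with
  | zero =>
    intro d
    cases d with
    | zero =>
      intro A L hA _ hL hc
      have : free 0 L = L := by
        ext p
        rw [mem_free]
        refine and_iff_left_of_imp fun hp => ?_
        have := (mem_X.1 (hL.1 hp)).2.2
        rw [Finsupp.degree_eq_zero_iff] at this
        simp [this]
      rw [this, hc]
      exact Finset.card_le_card (Finset.filter_subset _ _)
    | succ d =>
      intro A L hA _ hL hc
      have : free 0 A = ∅ := by
        rw [Finset.eq_empty_iff_forall_notMem]
        intro p hp
        have := mem_X.1 (free_subset hA hp)
        have h0 : p.e = 0 := by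
          ext i
          exact this.2.1 i (Nat.zero_le _)
        have h1 := this.2.2
        rw [h0] at h1
        simp at h1
      simp [this]
  | succ k ihk =>
    intro d
    induction d with
    | zero =>
      intro A L hA _ hL hc
      have : free (k+1) L = L := by
        ext p
        rw [mem_free]
        refine and_iff_left_of_imp fun hp => ?_
        have := (mem_X.1 (hL.1 hp)).2.2
        rw [Finsupp.degree_eq_zero_iff] at this
        simp [this]
      rw [this, hc]
      exact Finset.card_le_card (Finset.filter_subset _ _)
    | succ d ihd =>
      intro A L hA hSt hL hc
      by_contra hlt
      rw [not_le] at hlt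
      have hfA := free_subset hA
      obtain ⟨C, hC, hCc⟩ := exists_init (X r (k+1) (d+1)) (free (k+1) A).card
        (Finset.card_le_card hfA)
      have hfL := hL.free
      have hsub := hfL.subset_of_card_le hC (by omega)
      obtain ⟨u, huC, huL⟩ : ∃ u ∈ C, u ∉ free (k+1) L := by
        by_contra hn
        push Not at hn
        have := Finset.card_le_card (show C ⊆ free (k+1) L from hn)
        omega
      have huX := hC.1 huC
      have huX' := free_X.1 huX
      have huL' : u ∉ L := fun h => huL (mem_free.2 ⟨h, huX'.2⟩)
      have hLu : ∀ l ∈ L, l < u := by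
        intro l hl
        by_contra hn
        exact huL' (hL.le hl huX'.1 (not_lt.1 hn))
      obtain ⟨j, w, hj, huw, hlast⟩ := exists_last (mem_X.1 huX).2.1 (by
        rw [(mem_X.1 huX).2.2]; omega)
      have hqA := quo_subset hA
      obtain ⟨D, hD, hDc⟩ := exists_init (X r (k+2) d) (quo (k+1) A).card
        (Finset.card_le_card hqA)
      have hqL := hL.quo
      have hcardA := card_free_add_card_quo (k+1) A
      have hcardL := card_free_add_card_quo (k+1) L
      have hwX : w ∈ X r (k+1) d := by
        rw [huw] at huX
        exact (mul_mem_X hj).1 huX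
      have hwD : w ∉ D := by
        intro hwD
        have : quo (k+1) L ⊆ D := by
          intro v hv
          have hvX := hqL.1 hv
          apply hD.le hwD hvX
          by_contra hn
          rw [mem_quo] at hv
          have h1 := hLu _ hv
          have h2 := mul_le_of_lt hlast (by rw [(mem_X.1 hwX).2.2, (mem_X.1 hvX).2.2])
            (not_le.1 hn) (k+1)
          rw [huw] at h1
          exact absurd h1 (not_lt.2 h2)
        have := Finset.card_le_card this
        omega
      apply hwD
      have h1 := ihk (d+1) (free (k+1) A) C hfA hSt.free hC hCc
      have h2 := ihd (quo (k+1) A) D hqA hSt.quo hD hDc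
      have h3 := card_free_add_card_quo k (free (k+1) A)
      have h4 := card_free_add_card_quo k C
      have h5 : (quo k (free (k+1) A)).card ≤ (free (k+1) (quo (k+1) A)).card := by
        apply Finset.card_le_card
        intro e he
        rw [mem_quo, mem_free] at he
        rw [mem_free, mem_quo]
        refine ⟨hSt e k (by omega) he.1, ?_⟩
        have := he.2
        simp at this
        exact this
      have h6 := hC.quo.subset_of_card_le hD.free (by omega)
      have h7 : w ∈ quo k C := by
        rw [mem_quo]
        apply hC.le huC ((mul_mem_X (Nat.lt_succ_self k)).2 hwX)
        rw [huw]
        exact mul_le_mul (by omega) w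
      exact (mem_free.1 (h6 h7)).1

end Mono


namespace Mono

/-- the part of the exponent away from `i`, `i+1` -/
noncomputable def rest (i : ℕ) (p : Mono) : ℕ →₀ ℕ := (p.e.erase i).erase (i+1)

/-- exponent of `i` plus exponent of `i+1` -/
noncomputable def tot (i : ℕ) (p : Mono) : ℕ := p.e i + p.e (i+1)

/-- redistribute the exponents of `i`, `i+1` -/
noncomputable def put (i : ℕ) (p : Mono) (a : ℕ) : Mono :=
  ⟨p.c, rest i p + Finsupp.single i a + Finsupp.single (i+1) (tot i p - a)⟩

@[simp] theorem put_c (i : ℕ) (p : Mono) (a : ℕ) : (put i p a).c = p.c := rfl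

theorem put_e_apply (i : ℕ) (p : Mono) (a l : ℕ) : (put i p a).e l =
    if l = i + 1 then p.e i + p.e (i+1) - a else if l = i then a else p.e l := by
  simp only [put, rest, tot, Finsupp.add_apply, Finsupp.erase_apply, Finsupp.single_apply]
  split_ifs <;> omega

theorem put_self (i : ℕ) (p : Mono) : put i p (p.e i) = p := by
  ext l
  · rfl
  · rw [put_e_apply]
    split_ifs with h1 h2
    · subst h1; omega
    · subst h2; rfl
    · rfl

theorem tot_put {i : ℕ} {p : Mono} {a : ℕ} (ha : a ≤ tot i p) : tot i (put i p a) = tot i p := by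
  unfold tot at *
  rw [put_e_apply, put_e_apply]
  simp
  omega

theorem put_put {i : ℕ} {p : Mono} {a : ℕ} (ha : a ≤ tot i p) (b : ℕ) :
    put i (put i p a) b = put i p b := by
  unfold tot at ha
  ext l
  · rfl
  · simp only [put_e_apply]
    split_ifs <;> omega

theorem put_e_self (i : ℕ) (p : Mono) (a : ℕ) : (put i p a).e i = a := by
  rw [put_e_apply]; simp

theorem degree_put {i : ℕ} {p : Mono} {a : ℕ} (ha : a ≤ tot i p) :
    (put i p a).e.degree = p.e.degree := by
  have key : ∀ b, b ≤ tot i p → (put i p b).e.degree = (rest i p).degree + tot i p := by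
    intro b hb
    simp only [put, map_add, Finsupp.degree_single]
    omega
  rw [key a ha, ← key (p.e i) (by unfold tot; omega), put_self]

theorem put_mem_X {r n d i : ℕ} (hi : i + 1 < n) {p : Mono} {a : ℕ} (ha : a ≤ tot i p) :
    put i p a ∈ X r n d ↔ p ∈ X r n d := by
  rw [mem_X, mem_X, degree_put ha, put_c]
  refine and_congr Iff.rfl (and_congr ?_ Iff.rfl)
  refine forall_congr' fun j => forall_congr' fun hj => ?_
  rw [put_e_apply, if_neg (by omega), if_neg (by omega)]

/-- weight -/
noncomputable def wt (n : ℕ) (p : Mono) : ℕ := Finsupp.weight (fun l => n - l) p.e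

theorem wt_put {i n : ℕ} (hi : i + 1 < n) {p : Mono} {a : ℕ} (ha : a ≤ tot i p) :
    wt n (put i p a) = wt n (put i p 0) + a := by
  simp only [wt, put, map_add, Finsupp.weight_single, smul_eq_mul]
  obtain ⟨m, hm⟩ : ∃ m, n = i + 1 + m := ⟨n - (i+1), by omega⟩
  obtain ⟨t, ht⟩ : ∃ t, tot i p = a + t := ⟨tot i p - a, by omega⟩
  rw [ht, hm, show i + 1 + m - i = m + 1 by omega, show i + 1 + m - (i+1) = m by omega,
    show a + t - a = t by omega]
  simp
  ring

/-- values occurring in a class -/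
noncomputable def V (i : ℕ) (A : Finset Mono) (p : Mono) : Finset ℕ :=
  open Classical in (Finset.range (tot i p + 1)).filter (fun a => put i p a ∈ A)

theorem mem_V {i : ℕ} {A : Finset Mono} {p : Mono} {a : ℕ} :
    a ∈ V i A p ↔ a ≤ tot i p ∧ put i p a ∈ A := by
  simp [V, Nat.lt_succ_iff]

theorem card_V_le (i : ℕ) (A : Finset Mono) (p : Mono) : (V i A p).card ≤ tot i p + 1 := by
  classical
  unfold V
  refine (Finset.card_filter_le _ _).trans ?_
  simp

theorem V_put {i : ℕ} {A : Finset Mono} {p : Mono} {a : ℕ} (ha : a ≤ tot i p) :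
    V i A (put i p a) = V i A p := by
  ext b
  rw [mem_V, mem_V, tot_put ha, put_put ha]

/-- compression -/
noncomputable def shift (i : ℕ) (Z A : Finset Mono) : Finset Mono :=
  open Classical in Z.filter (fun p => p.e i < (V i A p).card)

theorem mem_shift {i : ℕ} {Z A : Finset Mono} {p : Mono} :
    p ∈ shift i Z A ↔ p ∈ Z ∧ p.e i < (V i A p).card := by
  simp [shift]

theorem V_shift {r n d i : ℕ} (hi : i + 1 < n) {A : Finset Mono} {p : Mono}
    (hp : p ∈ X r n d) : V i (shift i (X r n d) A) p = Finset.range (V i A p).card := by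
  ext a
  rw [mem_V, mem_shift, Finset.mem_range]
  have := card_V_le i A p
  constructor
  · rintro ⟨h1, h2, h3⟩
    rwa [V_put h1, put_e_self] at h3
  · intro h
    have h1 : a ≤ tot i p := by omega
    refine ⟨h1, (put_mem_X hi h1).2 hp, ?_⟩
    rwa [V_put h1, put_e_self]

theorem sum_fiber {r n d i : ℕ} (hi : i + 1 < n) {A : Finset Mono} (hA : A ⊆ X r n d)
    (g : Mono → ℕ) : ∑ p ∈ A, g p =
      ∑ y ∈ (X r n d).filter (fun y => y.e i = 0), ∑ a ∈ V i A y, g (put i y a) := by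
  classical
  rw [← Finset.sum_fiberwise_of_maps_to (g := fun p => put i p 0)
    (t := (X r n d).filter (fun y => y.e i = 0))]
  · apply Finset.sum_congr rfl
    intro y hy
    have hy0 := (Finset.mem_filter.1 hy).2
    symm
    apply Finset.sum_nbij (fun a => put i y a)
    · intro a ha
      rw [mem_V] at ha
      rw [Finset.mem_filter]
      refine ⟨ha.2, ?_⟩
      rw [put_put ha.1, ← hy0, put_self]
    · intro a _ b _ hab
      have := congrArg (fun x : Mono => x.e i) hab
      simpa [put_e_self] using this
    · intro p hp
      simp only [Finset.coe_filter, Set.mem_setOf_eq] at hp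
      have h0 : (0:ℕ) ≤ tot i p := Nat.zero_le _
      have h1 : p.e i ≤ tot i p := by unfold tot; omega
      refine ⟨p.e i, ?_, ?_⟩
      · rw [Finset.mem_coe, mem_V, ← hp.2, tot_put h0, put_put h0, put_self]
        exact ⟨h1, hp.1⟩
      · change put i y (p.e i) = p
        rw [← hp.2, put_put h0, put_self]
    · intro a _; rfl
  · intro p hp
    rw [Finset.mem_filter]
    exact ⟨(put_mem_X hi (Nat.zero_le _)).2 (hA hp), put_e_self _ _ _⟩

theorem shift_subset (i : ℕ) (Z A : Finset Mono) : shift i Z A ⊆ Z := fun _ h => (mem_shift.1 h).1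

theorem card_shift {r n d i : ℕ} (hi : i + 1 < n) {A : Finset Mono} (hA : A ⊆ X r n d) :
    (shift i (X r n d) A).card = A.card := by
  rw [Finset.card_eq_sum_ones, Finset.card_eq_sum_ones, sum_fiber hi hA,
    sum_fiber hi (shift_subset _ _ _)]
  apply Finset.sum_congr rfl
  intro y hy
  rw [V_shift hi (Finset.mem_filter.1 hy).1]
  simp

theorem sum_range_lt {W : Finset ℕ} (h : W ≠ Finset.range W.card) :
    ∑ a ∈ Finset.range W.card, a < ∑ a ∈ W, a := by
  set κ := W.card with hκ
  set R := Finset.range κ with hR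
  have hc : (R \ W).card = (W \ R).card := by
    have h1 := Finset.card_sdiff_add_card_inter R W
    have h2 := Finset.card_sdiff_add_card_inter W R
    rw [Finset.inter_comm] at h2
    have h3 : R.card = κ := by simp [hR]
    omega
  have hne : (W \ R).card ≠ 0 := by
    intro h0
    rw [Finset.card_eq_zero, Finset.sdiff_eq_empty_iff_subset] at h0
    exact h (Finset.eq_of_subset_of_card_le h0 (by simp [hR, hκ]))
  have e1 := Finset.sum_inter_add_sum_sdiff R W (fun a => a)
  have e2 := Finset.sum_inter_add_sum_sdiff W R (fun a => a)
  rw [Finset.inter_comm] at e2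
  have e3 : ∑ a ∈ W \ R, κ ≤ ∑ a ∈ W \ R, a := by
    apply Finset.sum_le_sum
    intro a ha
    simp [hR] at ha
    exact ha.2
  have e4 : ∑ a ∈ R \ W, a < ∑ a ∈ R \ W, κ := by
    apply Finset.sum_lt_sum_of_nonempty
    · rw [← Finset.card_ne_zero]; omega
    · intro a ha
      simp [hR] at ha
      exact ha.1
  rw [Finset.sum_const] at e3 e4
  rw [hc] at e4
  omega

theorem sum_range_le (W : Finset ℕ) : ∑ a ∈ Finset.range W.card, a ≤ ∑ a ∈ W, a := by
  by_cases h : W = Finset.range W.card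
  · rw [← h]
  · exact (sum_range_lt h).le

theorem wt_shift_lt {r n d i : ℕ} (hi : i + 1 < n) {A : Finset Mono} (hA : A ⊆ X r n d)
    {q : Mono} (h1 : mul i q ∈ A) (h2 : mul (i+1) q ∉ A) :
    ∑ p ∈ shift i (X r n d) A, wt n p < ∑ p ∈ A, wt n p := by
  rw [sum_fiber hi hA, sum_fiber hi (shift_subset _ _ _)]
  have key : ∀ y, ∀ B : Finset Mono, ∑ a ∈ V i B y, wt n (put i y a) =
      (V i B y).card * wt n (put i y 0) + ∑ a ∈ V i B y, a := by
    intro y B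
    rw [Finset.sum_congr rfl (fun a ha => wt_put hi (mem_V.1 ha).1), Finset.sum_add_distrib]
    simp
  apply Finset.sum_lt_sum
  · intro y hy
    rw [key, key, V_shift hi (Finset.mem_filter.1 hy).1, Finset.card_range]
    have := sum_range_le (V i A y)
    omega
  · refine ⟨put i (mul i q) 0, ?_, ?_⟩
    · rw [Finset.mem_filter]
      exact ⟨(put_mem_X hi (Nat.zero_le _)).2 (hA h1), put_e_self _ _ _⟩
    · have hy : put i (mul i q) 0 ∈ X r n d := (put_mem_X hi (Nat.zero_le _)).2 (hA h1)
      rw [key, key, V_shift hi hy, Finset.card_range]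
      rw [V_put (Nat.zero_le _)]
      have : V i A (mul i q) ≠ Finset.range (V i A (mul i q)).card := by
        intro heq
        have m1 : (mul i q).e i ∈ V i A (mul i q) := by
          rw [mem_V, put_self]
          exact ⟨by unfold tot; omega, h1⟩
        have m2 : q.e i ∉ V i A (mul i q) := by
          rw [mem_V]
          rintro ⟨_, h⟩
          apply h2
          convert h using 1
          ext l
          · rfl
          · simp only [put_e_apply, mul_e_apply]
            split_ifs <;> first | omega | (subst_vars; omega)
        rw [heq, Finset.mem_range] at m1 m2
        simp at m1
        omega
      have := sum_range_lt this
      omega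

/-- all divisors of elements of `A'` by one variable lie in `A` -/
def Closed (n : ℕ) (A' A : Finset Mono) : Prop := ∀ q i, i < n → mul i q ∈ A' → q ∈ A

theorem num_aux {t : ℕ} {W' W : Finset ℕ} (h' : ∀ a ∈ W', a ≤ t + 1) (h : ∀ a ∈ W, a ≤ t)
    (h1 : ∀ a ∈ W', a ≤ t → a ∈ W) (h2 : ∀ a ∈ W', 1 ≤ a → a - 1 ∈ W) :
    W'.card ≤ W.card ∨ W.card = t + 1 := by
  by_cases hfull : ∀ a ≤ t, a ∈ W
  · right
    have : W = Finset.range (t+1) := by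
      ext a
      rw [Finset.mem_range]
      exact ⟨fun ha => by have := h a ha; omega, fun ha => hfull a (by omega)⟩
    rw [this]; simp
  · left
    push Not at hfull
    obtain ⟨a0, ha0, hn⟩ := hfull
    have hx : ∀ a ∈ W', a ≠ a0 ∧ a ≠ a0 + 1 := by
      intro a ha
      constructor
      · rintro rfl; exact hn (h1 _ ha ha0)
      · rintro rfl; exact hn (h2 _ ha (by omega))
    apply Finset.card_le_card_of_injOn (fun a => if a < a0 then a else a - 1)
    · intro a ha
      have ha : a ∈ W' := ha
      have := hx a ha
      have := h' a ha
      change (if a < a0 then a else a - 1) ∈ W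
      split_ifs with hlt
      · exact h1 a ha (by omega)
      · exact h2 a ha (by omega)
    · intro a ha b hb hab
      have := hx a ha
      have := hx b hb
      simp only at hab
      split_ifs at hab <;> omega

theorem shift_closed {r n d i : ℕ} (hi : i + 1 < n) {A' A : Finset Mono}
    (h : Closed n A' A) : Closed n (shift i (X r n (d+1)) A') (shift i (X r n d) A) := by
  intro q l hl hq
  rw [mem_shift] at hq ⊢
  refine ⟨(mul_mem_X hl).1 hq.1, ?_⟩
  have hq2 := hq.2
  rw [mul_e_apply] at hq2
  by_cases hl' : l = i ∨ l = i + 1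
  · have ht : tot i (mul l q) = tot i q + 1 := by
      unfold tot
      simp only [mul_e_apply]
      rcases hl' with rfl | rfl <;> simp <;> omega
    have e1 : ∀ a ≤ tot i q, put i (mul l q) a = mul (i+1) (put i q a) := by
      intro a ha
      unfold tot at ha
      ext m
      · rfl
      · simp only [put_e_apply, mul_e_apply]
        rcases hl' with rfl | rfl <;> split_ifs <;> omega
    have e2 : ∀ a, 1 ≤ a → put i (mul l q) a = mul i (put i q (a-1)) := by
      intro a ha
      ext m
      · rfl
      · simp only [put_e_apply, mul_e_apply]
        rcases hl' with rfl | rfl <;> split_ifs <;> omega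
    have := num_aux (t := tot i q) (W' := V i A' (mul l q)) (W := V i A q) ?_ ?_ ?_ ?_
    · rcases this with h3 | h3
      · omega
      · rw [h3]; unfold tot; omega
    · intro a ha
      rw [mem_V, ht] at ha
      exact ha.1
    · intro a ha
      exact (mem_V.1 ha).1
    · intro a ha hat
      rw [mem_V, e1 a hat] at ha
      exact mem_V.2 ⟨hat, h _ _ hi ha.2⟩
    · intro a ha ha1
      rw [mem_V, e2 a ha1, ht] at ha
      exact mem_V.2 ⟨by omega, h _ _ (by omega) ha.2⟩
  · push Not at hl'
    have ht : tot i (mul l q) = tot i q := by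
      unfold tot
      simp [hl'.1, hl'.2]
    have hsub : V i A' (mul l q) ⊆ V i A q := by
      intro a ha
      rw [mem_V, ht] at ha
      refine mem_V.2 ⟨ha.1, h _ l hl ?_⟩
      convert ha.2 using 1
      ext m
      · rfl
      · simp only [put_e_apply, mul_e_apply]
        split_ifs <;> omega
    have := Finset.card_le_card hsub
    omega

theorem exists_stable {r n d : ℕ} : ∀ (N : ℕ) (A' A : Finset Mono), A' ⊆ X r n (d+1) →
    A ⊆ X r n d → Closed n A' A → ∑ p ∈ A', wt n p ≤ N →
    ∃ B' B : Finset Mono, B' ⊆ X r n (d+1) ∧ B ⊆ X r n d ∧ Closed n B' B ∧ Stable n B' ∧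
      B'.card = A'.card ∧ B.card = A.card := by
  intro N
  induction N with
  | zero =>
    intro A' A hA' hA hc hN
    refine ⟨A', A, hA', hA, hc, ?_, rfl, rfl⟩
    intro q i hi hq
    by_contra hn
    have := wt_shift_lt hi hA' hq hn
    omega
  | succ N ih =>
    intro A' A hA' hA hc hN
    by_cases hs : Stable n A'
    · exact ⟨A', A, hA', hA, hc, hs, rfl, rfl⟩
    · unfold Stable at hs
      push Not at hs
      obtain ⟨q, i, hi, hq, hn⟩ := hs
      have := wt_shift_lt hi hA' hq hn
      obtain ⟨B', B, h1, h2, h3, h4, h5, h6⟩ := ih _ _ (shift_subset i (X r n (d+1)) A')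
        (shift_subset i (X r n d) A) (shift_closed hi hc) (by omega)
      exact ⟨B', B, h1, h2, h3, h4, by rw [h5, card_shift hi hA'], by rw [h6, card_shift hi hA]⟩

end Mono


namespace Mono

open Classical in
/-- indices of variables not before the last variable of `w` -/
noncomputable def tauSet (n : ℕ) (w : Mono) : Finset ℕ :=
  (Finset.range n).filter (fun j => LastLE j w)

theorem mem_tauSet {n j : ℕ} {w : Mono} : j ∈ tauSet n w ↔ j < n ∧ LastLE j w := by
  simp [tauSet]

open Classical in
/-- The monomials all of whose divisors lie in `L` (for initial segments `L`). -/
noncomputable def U (n : ℕ) (L : Finset Mono) : Finset Mono :=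
  (L.sigma (fun w => tauSet n w)).image (fun x => mul x.2 x.1)

theorem mem_U {n : ℕ} {L : Finset Mono} {u : Mono} :
    u ∈ U n L ↔ ∃ w ∈ L, ∃ j, j < n ∧ LastLE j w ∧ mul j w = u := by
  simp only [U, Finset.mem_image, Finset.mem_sigma, mem_tauSet, Sigma.exists]
  constructor
  · rintro ⟨w, j, ⟨h1, h2, h3⟩, h4⟩
    exact ⟨w, h1, j, h2, h3, h4⟩
  · rintro ⟨w, h1, j, h2, h3, h4⟩
    exact ⟨w, j, ⟨h1, h2, h3⟩, h4⟩

theorem last_unique {w w' : Mono} {j j' : ℕ} (h : LastLE j w) (h' : LastLE j' w')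
    (he : mul j w = mul j' w') : j = j' := by
  rcases lt_trichotomy j j' with hlt | heq | hlt
  · have := congrArg (fun x : Mono => x.e j') he
    simp [h j' hlt, show j ≠ j' by omega] at this
  · exact heq
  · have := congrArg (fun x : Mono => x.e j) he
    simp [h' j hlt, show j' ≠ j by omega] at this

theorem card_U (n : ℕ) (L : Finset Mono) : (U n L).card = ∑ w ∈ L, (tauSet n w).card := by
  classical
  unfold U
  rw [Finset.card_image_of_injOn, Finset.card_sigma]
  rintro ⟨w, j⟩ h ⟨w', j'⟩ h' he
  simp only [Finset.coe_sigma, Set.mem_sigma_iff, Finset.mem_coe, mem_tauSet] at h h'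
  simp only at he
  have hj := last_unique h.2.2 h'.2.2 he
  subst hj
  have := mul_injective j he
  subst this
  rfl

theorem U_subset {r n d : ℕ} {L : Finset Mono} (hL : L ⊆ X r n d) : U n L ⊆ X r n (d+1) := by
  intro u hu
  obtain ⟨w, hw, j, hj, _, rfl⟩ := mem_U.1 hu
  exact (mul_mem_X hj).2 (hL hw)

theorem Init.U {r n d : ℕ} {L : Finset Mono} (hL : Init (X r n d) L) :
    Init (X r n (d+1)) (U n L) := by
  refine ⟨U_subset hL.1, fun y hy x hx hxy => ?_⟩
  obtain ⟨w, hw, j, hj, hl, rfl⟩ := mem_U.1 hy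
  obtain ⟨j', w', hj', rfl, hl'⟩ := exists_last (mem_X.1 hx).2.1 (by
    rw [(mem_X.1 hx).2.2]; omega)
  have hw' := (mul_mem_X hj').1 hx
  refine mem_U.2 ⟨w', hL.le hw hw' ?_, j', hj', hl', rfl⟩
  by_contra hn
  have := mul_le_of_lt hl (by rw [(mem_X.1 (hL.1 hw)).2.2, (mem_X.1 hw').2.2]) (not_le.1 hn) j'
  exact absurd hxy (not_lt.2 this)

theorem closed_of_card_le {r n d : ℕ} {L L' : Finset Mono} (hL : Init (X r n d) L)
    (hL' : Init (X r n (d+1)) L') (hc : L'.card ≤ (U n L).card) : Closed n L' L := by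
  have hsub := hL'.subset_of_card_le hL.U hc
  intro v i hi hv
  have hvX := (mul_mem_X hi).1 (hL'.1 hv)
  obtain ⟨w, hw, j, hj, hl, he⟩ := mem_U.1 (hsub hv)
  apply hL.le hw hvX
  by_contra hn
  have h1 := mul_lt (i := i) (not_le.1 hn)
  have hij : i ≤ j := by
    by_contra hlt
    have := congrArg (fun x : Mono => x.e i) he
    simp [hl i (by omega), show j ≠ i by omega] at this
  have h2 := mul_le_mul hij w
  rw [he] at h2
  exact absurd h1 (not_lt.2 h2)

theorem card_le_card_U {r k d : ℕ} {A' A L : Finset Mono} (hA' : A' ⊆ X r (k+1) (d+1))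
    (hA : A ⊆ X r (k+1) d) (hcl : Closed (k+1) A' A) (hL : Init (X r (k+1) d) L)
    (hc : L.card = A.card) : A'.card ≤ (U (k+1) L).card := by
  obtain ⟨B', B, h1, h2, h3, h4, h5, h6⟩ := exists_stable _ A' A hA' hA hcl le_rfl
  obtain ⟨L', hL', hL'c⟩ := exists_init (X r (k+1) (d+1)) B'.card (Finset.card_le_card h1)
  have g := green r k (d+1) B' L' h1 h4 hL' hL'c
  have e1 := card_free_add_card_quo k B'
  have e2 := card_free_add_card_quo k L'
  have e3 : (quo k B').card ≤ B.card :=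
    Finset.card_le_card (fun q hq => h3 q k (Nat.lt_succ_self k) (mem_quo.1 hq))
  have hsub := hL'.quo.subset_of_card_le hL (by omega)
  rw [← h5, ← hL'c]
  apply Finset.card_le_card
  intro u hu
  have huX := hL'.1 hu
  obtain ⟨j, w, hj, rfl, hl⟩ := exists_last (mem_X.1 huX).2.1 (by
    rw [(mem_X.1 huX).2.2]; omega)
  refine mem_U.2 ⟨w, hsub ?_, j, hj, hl, rfl⟩
  rw [mem_quo]
  have hw := (mul_mem_X hj).1 huX
  exact hL'.le hu ((mul_mem_X (Nat.lt_succ_self k)).2 hw) (mul_le_mul (by omega) w)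

/-- monomials of component `q` and degree `d` in variables `lo, …, n-1` -/
noncomputable def Z (q lo n d : ℕ) : Finset Mono :=
  (Finset.finsuppAntidiag (Finset.Ico lo n) d).map
    ⟨fun x => ⟨q, x⟩, fun x y h => congrArg (fun z : Mono => z.e) h⟩

theorem mem_Z {q lo n d : ℕ} {p : Mono} :
    p ∈ Z q lo n d ↔ p.c = q ∧ (∀ i, i < lo → p.e i = 0) ∧ (∀ i, n ≤ i → p.e i = 0) ∧
      p.e.degree = d := by
  simp only [Z, Finset.mem_map, Finset.mem_finsuppAntidiag', Function.Embedding.coeFn_mk]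
  have hs : p.e.support ⊆ Finset.Ico lo n ↔
      (∀ i, i < lo → p.e i = 0) ∧ (∀ i, n ≤ i → p.e i = 0) := by
    constructor
    · intro h
      constructor
      all_goals
        intro i hi
        by_contra hn
        have := h (Finsupp.mem_support_iff.2 hn)
        simp at this; omega
    · intro h i hi
      rw [Finsupp.mem_support_iff] at hi
      rw [Finset.mem_Ico]
      by_contra hn
      rcases Nat.lt_or_ge i lo with h1 | h1
      · exact hi (h.1 i h1)
      · exact hi (h.2 i (by omega))
  constructor
  · rintro ⟨e, ⟨h2, h3⟩, rfl⟩
    exact ⟨rfl, (hs.1 h3).1, (hs.1 h3).2, h2⟩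
  · rintro ⟨h1, h2, h3, h4⟩
    refine ⟨p.e, ⟨h4, hs.2 ⟨h2, h3⟩⟩, ?_⟩
    ext1
    · exact h1.symm
    · rfl

theorem card_Z (q lo n d : ℕ) : (Z q lo n d).card = Nat.multichoose (n - lo) d := by
  rw [Z, Finset.card_map, Finset.card_finsuppAntidiag_nat_eq_multichoose, Nat.card_Ico]

theorem card_X (r n d : ℕ) : (X r n d).card = r * Nat.multichoose n d := by
  rw [X, Finset.card_map, Finset.card_product, Finset.card_finsuppAntidiag_nat_eq_multichoose,
    Finset.card_range, Finset.card_range]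

theorem U_X (r n d : ℕ) : U n (X r n d) = X r n (d+1) := by
  apply Finset.Subset.antisymm (U_subset le_rfl)
  intro u hu
  obtain ⟨j, w, hj, rfl, hl⟩ := exists_last (mem_X.1 hu).2.1 (by
    rw [(mem_X.1 hu).2.2]; omega)
  exact mem_U.2 ⟨w, (mul_mem_X hj).1 hu, j, hj, hl, rfl⟩

theorem exists_pos {w : Mono} (h : w.e.degree ≠ 0) : ∃ l, w.e l ≠ 0 := by
  by_contra hn
  push Not at hn
  apply h
  rw [Finsupp.degree_eq_zero_iff]
  ext l
  exact hn l

theorem U_Z (q lo n d : ℕ) (hd : d ≠ 0) : U n (Z q lo n d) = Z q lo n (d+1) := by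
  ext u
  rw [mem_U]
  constructor
  · rintro ⟨w, hw, j, hj, hl, rfl⟩
    rw [mem_Z] at hw ⊢
    obtain ⟨h1, h2, h3, h4⟩ := hw
    obtain ⟨l, hl0⟩ := exists_pos (w := w) (by omega)
    have hlj : l ≤ j := by
      by_contra hn
      exact hl0 (hl l (by omega))
    have hlo : lo ≤ l := by
      by_contra hn
      exact hl0 (h2 l (by omega))
    refine ⟨h1, fun i hi => ?_, fun i hi => ?_, by simp [h4]⟩
    · simp [h2 i hi, show j ≠ i by omega]
    · simp [h3 i hi, show j ≠ i by omega]
  · intro hu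
    rw [mem_Z] at hu
    obtain ⟨h1, h2, h3, h4⟩ := hu
    obtain ⟨j, w, hj, rfl, hl⟩ := exists_last h3 (by omega)
    refine ⟨w, ?_, j, hj, hl, rfl⟩
    rw [mem_Z]
    refine ⟨h1, fun i hi => ?_, fun i hi => ?_, by simpa using h4⟩
    · have := h2 i hi
      simp at this
      exact this.1
    · have := h3 i hi
      simp at this
      exact this.1

theorem sum_tau_Z (q lo n d : ℕ) (hd : d ≠ 0) :
    ∑ w ∈ Z q lo n d, (tauSet n w).card = Nat.multichoose (n - lo) (d+1) := by
  rw [← card_U, U_Z q lo n d hd, card_Z]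

theorem sum_tau_X (r n d : ℕ) :
    ∑ w ∈ X r n d, (tauSet n w).card = r * Nat.multichoose n (d+1) := by
  rw [← card_U, U_X, card_X]

theorem chain_ge {m : ℕ → ℕ} {s d : ℕ} (h1 : ∀ i, s ≤ i → i < d → m i < m (i+1))
    (h2 : s ≤ m s) : ∀ i, s ≤ i → i ≤ d → i ≤ m i := by
  intro i hi
  induction i, hi using Nat.le_induction with
  | base => intro _; exact h2
  | succ i hi ih =>
    intro hd
    have := h1 i hi (by omega)
    have := ih (by omega)
    omega

theorem exists_block (q n s : ℕ) (m : ℕ → ℕ) (hs : 1 ≤ s) : ∀ d lo, s ≤ d + 1 →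
    (s ≤ d → m d + lo + 2 ≤ n + d ∧ (∀ i, s ≤ i → i < d → m i < m (i+1)) ∧ s ≤ m s) →
    ∃ Y, Init (Z q lo n d) Y ∧ Y.card = ∑ i ∈ Finset.Icc s d, (m i).choose i ∧
      ∑ w ∈ Y, (tauSet n w).card = ∑ i ∈ Finset.Icc s d, (m i + 1).choose (i+1) := by
  classical
  intro d
  induction d with
  | zero =>
    intro lo _ _
    refine ⟨∅, ⟨by simp, by simp⟩, ?_, ?_⟩ <;> simp [Finset.Icc_eq_empty (show ¬ s ≤ 0 by omega)]
  | succ d ih =>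
    intro lo hsd hm
    by_cases hsd' : s ≤ d + 1
    swap
    · refine ⟨∅, ⟨by simp, by simp⟩, ?_, ?_⟩ <;> simp [Finset.Icc_eq_empty hsd']
    obtain ⟨hm1, hm2, hm3⟩ := hm hsd'
    have hge := chain_ge hm2 hm3 (d+1) hsd' le_rfl
    obtain ⟨t, ht⟩ : ∃ t, m (d+1) = t + d := ⟨m (d+1) - d, by omega⟩
    obtain ⟨a, ha⟩ : ∃ a, n = a + 1 + t := ⟨n - (1 + t), by omega⟩
    have hlo : lo ≤ a := by omega
    obtain ⟨Y', hY', hc', ht'⟩ := ih a hsd' (fun h => by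
      refine ⟨?_, fun i hi hid => hm2 i hi (by omega), hm3⟩
      have := hm2 d h (by omega)
      omega)
    have hdisj : Disjoint (Z q (a+1) n (d+1)) (Y'.map ⟨mul a, mul_injective a⟩) := by
      rw [Finset.disjoint_left]
      intro p hp hp'
      obtain ⟨y, _, rfl⟩ := Finset.mem_map.1 hp'
      have := (mem_Z.1 hp).2.1 a (by omega)
      simp at this
    refine ⟨Z q (a+1) n (d+1) ∪ Y'.map ⟨mul a, mul_injective a⟩, ⟨?_, ?_⟩, ?_, ?_⟩
    · intro p hp
      rcases Finset.mem_union.1 hp with hp | hp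
      · rw [mem_Z] at hp ⊢
        exact ⟨hp.1, fun i hi => hp.2.1 i (by omega), hp.2.2⟩
      · obtain ⟨y, hy, rfl⟩ := Finset.mem_map.1 hp
        have := mem_Z.1 (hY'.1 hy)
        rw [mem_Z]
        refine ⟨this.1, fun i hi => ?_, fun i hi => ?_, ?_⟩
        · simp [this.2.1 i (by omega), show a ≠ i by omega]
        · simp [this.2.2.1 i (by omega), show a ≠ i by omega]
        · simp [this.2.2.2]
    · intro y hy x hx hxy
      have hx' := mem_Z.1 hx
      -- `y` has no variables before `a`
      have hya : y.c = q ∧ ∀ i < a, y.e i = 0 := by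
        rcases Finset.mem_union.1 hy with hp | hp
        · rw [mem_Z] at hp
          exact ⟨hp.1, fun i hi => hp.2.1 i (by omega)⟩
        · obtain ⟨z, hz, rfl⟩ := Finset.mem_map.1 hp
          have := mem_Z.1 (hY'.1 hz)
          exact ⟨this.1, fun i hi => by simp [this.2.1 i hi, show a ≠ i by omega]⟩
      rw [lt_iff] at hxy
      have hxy' : ∃ i, (∀ j < i, x.e j = y.e j) ∧ x.e i < y.e i := by
        rcases hxy with h | h
        · rw [hx'.1, hya.1] at h; omega
        · exact h.2
      have hxa : ∀ i < a, x.e i = 0 := by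
        obtain ⟨i, hi1, hi2⟩ := hxy'
        intro l hl
        by_cases hli : l < i
        · rw [hi1 l hli, hya.2 l hl]
        · have := hya.2 i (by omega)
          omega
      by_cases hxa0 : x.e a = 0
      · apply Finset.mem_union_left
        rw [mem_Z]
        refine ⟨hx'.1, fun i hi => ?_, hx'.2.2⟩
        rcases Nat.lt_succ_iff_lt_or_eq.1 hi with h | h
        · exact hxa i h
        · rw [h]; exact hxa0
      · apply Finset.mem_union_right
        obtain ⟨x', rfl⟩ := exists_mul (Nat.pos_of_ne_zero hxa0)
        rcases Finset.mem_union.1 hy with hp | hp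
        · exfalso
          have hp0 := (mem_Z.1 hp).2.1 a (by omega)
          obtain ⟨i, hi1, hi2⟩ := hxy'
          rcases lt_trichotomy i a with h | h | h
          · have := hya.2 i h
            omega
          · subst h; omega
          · have := hi1 a h
            omega
        · obtain ⟨z, hz, rfl⟩ := Finset.mem_map.1 hp
          apply Finset.mem_map_of_mem (⟨mul a, mul_injective a⟩ : Mono ↪ Mono)
          have hxz : x' < z := mul_lt_iff.1 (lt_iff.2 hxy)
          refine hY'.2 z hz x' ?_ hxz
          rw [mem_Z]
          refine ⟨hx'.1, fun i hi => ?_, fun i hi => ?_, ?_⟩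
          · have := hxa i hi
            simp at this
            exact this.1
          · have := hx'.2.2.1 i hi
            simp at this
            exact this.1
          · simpa using hx'.2.2.2
    · rw [Finset.card_union_of_disjoint hdisj, card_Z, Finset.card_map, hc',
        Finset.sum_Icc_succ_top hsd', Nat.multichoose_eq, ht, ha,
        show a + 1 + t - (a + 1) + (d + 1) - 1 = t + d by omega]
      ring
    · rw [Finset.sum_union hdisj, sum_tau_Z _ _ _ _ (by omega), Finset.sum_map,
        Finset.sum_Icc_succ_top hsd', ← ht', Nat.multichoose_eq, ht,
        show n - (a + 1) + (d + 1 + 1) - 1 = t + d + 1 by omega, add_comm]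
      congr 1
      apply Finset.sum_congr rfl
      intro y hy
      congr 1
      have hyZ := mem_Z.1 (hY'.1 hy)
      have hd0 : d ≠ 0 := by
        rintro rfl
        rw [Finset.Icc_eq_empty (show ¬ s ≤ 0 by omega), Finset.sum_empty,
          Finset.card_eq_zero] at hc'
        simp [hc'] at hy
      obtain ⟨l, hl⟩ := exists_pos (w := y) (by omega)
      have hal : a ≤ l := by
        by_contra hn
        exact hl (hyZ.2.1 l (by omega))
      ext j
      rw [mem_tauSet, mem_tauSet]
      refine and_congr Iff.rfl ⟨fun h i hi => ?_, fun h i hi => ?_⟩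
      · have := h i hi
        simp at this
        exact this.1
      · have hlj : l ≤ j := by
          by_contra hn
          exact hl (h l (by omega))
        simp [h i hi, show a ≠ i by omega]

theorem exists_exp : ∀ d M b, b < Nat.choose (M+1) d → ∃ (s : ℕ) (m : ℕ → ℕ),
    1 ≤ s ∧ s ≤ d + 1 ∧ (∀ i, i < s → m i = 0) ∧ (∀ i, d < i → m i = 0) ∧
    (s ≤ d → m d ≤ M ∧ (∀ i, s ≤ i → i < d → m i < m (i + 1)) ∧ s ≤ m s) ∧
    b = ∑ i ∈ Finset.Icc s d, Nat.choose (m i) i := by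
  intro d
  induction d with
  | zero =>
    intro M b hb
    simp at hb
    exact ⟨1, fun _ => 0, le_rfl, le_rfl, fun _ _ => rfl, fun _ _ => rfl, by simp, by simp [hb]⟩
  | succ d ih =>
    intro M b hb
    by_cases hb0 : b = 0
    · exact ⟨d + 2, fun _ => 0, by omega, le_rfl, fun _ _ => rfl, fun _ _ => rfl, by simp,
        by simp [hb0]⟩
    have hdM : d + 1 ≤ M := by
      by_contra hn
      have : Nat.choose (M+1) (d+1) ≤ 1 := by
        rcases Nat.lt_or_ge M d with h | h
        · rw [Nat.choose_eq_zero_of_lt (by omega)]; omega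
        · rw [show M = d by omega]; simp
      omega
    set k := Nat.findGreatest (fun k => Nat.choose k (d+1) ≤ b) M with hk
    have hkM : k ≤ M := Nat.findGreatest_le M
    have hdk : d + 1 ≤ k := Nat.le_findGreatest hdM (by simp; omega)
    have hkb : Nat.choose k (d+1) ≤ b :=
      Nat.findGreatest_spec (P := fun k => Nat.choose k (d+1) ≤ b) hdM (by simp; omega)
    have hkb' : b < Nat.choose (k+1) (d+1) := by
      rcases hkM.eq_or_lt with h | h
      · rw [h]; exact hb
      · have := Nat.findGreatest_is_greatest (P := fun k => Nat.choose k (d+1) ≤ b)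
          (n := M) (k := k+1) (by omega) (by omega)
        omega
    rw [Nat.choose_succ_succ'] at hkb'
    obtain ⟨s, m, h1, h2, h3, h4, h5, h6⟩ := ih (k-1) (b - Nat.choose k (d+1)) (by
      rw [show k - 1 + 1 = k by omega]; omega)
    refine ⟨s, Function.update m (d+1) k, h1, by omega, ?_, ?_, ?_, ?_⟩
    · intro i hi
      rw [Function.update_of_ne (by omega)]
      exact h3 i hi
    · intro i hi
      rw [Function.update_of_ne (by omega)]
      exact h4 i (by omega)
    · intro _
      refine ⟨by simpa using hkM, ?_, ?_⟩
      · intro i hi hid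
        rw [Function.update_of_ne (by omega)]
        rcases Nat.lt_succ_iff_lt_or_eq.1 hid with h | h
        · rw [Function.update_of_ne (by omega)]
          exact (h5 (by omega)).2.1 i hi h
        · subst h
          have := (h5 hi).1
          simp
          omega
      · rcases h2.eq_or_lt with h | h
        · rw [h]; simpa using hdk
        · rw [Function.update_of_ne (by omega)]
          exact (h5 (by omega)).2.2
    · rw [Finset.sum_Icc_succ_top h2, Function.update_self]
      rw [Finset.sum_congr rfl (g := fun i => Nat.choose (m i) i)]
      · omega
      · intro i hi
        rw [Finset.mem_Icc] at hi
        rw [Function.update_of_ne (by omega)]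

theorem exists_expansion (n d b : ℕ) (hn : 1 ≤ n) (hd : d ≠ 0) :
    ∃ sm : ℕ × (ℕ → ℕ), IsBinomialExpansion n d b sm.1 sm.2 := by
  have hpos : 0 < Nat.choose (n - 1 + d) d := Nat.choose_pos (by omega)
  obtain ⟨s, m, h1, h2, h3, h4, h5, h6⟩ := exists_exp d (n + d - 2) (b % Nat.choose (n-1+d) d) (by
    rw [show n + d - 2 + 1 = n - 1 + d by omega]
    exact Nat.mod_lt _ hpos)
  refine ⟨(s, Function.update m (d+1) (b / Nat.choose (n-1+d) d)), h1, h2, ?_, ?_, ?_, ?_⟩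
  · intro i hi
    simp only at hi ⊢
    rw [Function.update_of_ne (by omega)]
    exact h3 i hi
  · intro i hi
    simp only at hi ⊢
    rw [Function.update_of_ne (by omega)]
    exact h4 i (by omega)
  · intro hs
    simp only at hs ⊢
    obtain ⟨a1, a2, a3⟩ := h5 hs
    refine ⟨by rwa [Function.update_of_ne (by omega)], ?_, by rwa [Function.update_of_ne (by omega)]⟩
    intro i hi hid
    rw [Function.update_of_ne (by omega), Function.update_of_ne (by omega)]
    exact a2 i hi hid
  · simp only [Function.update_self]
    rw [Finset.sum_congr rfl (g := fun i => Nat.choose (m i) i), ← h6]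
    · exact (Nat.div_add_mod' _ _).symm
    · intro i hi
      rw [Finset.mem_Icc] at hi
      rw [Function.update_of_ne (by omega)]

theorem Init.mono {r R n d : ℕ} {L : Finset Mono} (h : Init (X r n d) L) (hr : r ≤ R) :
    Init (X R n d) L := by
  refine ⟨fun p hp => ?_, fun y hy x hx hxy => ?_⟩
  · have := mem_X.1 (h.1 hp)
    exact mem_X.2 ⟨by omega, this.2⟩
  · refine h.2 y hy x ?_ hxy
    have hx' := mem_X.1 hx
    have hy' := mem_X.1 (h.1 hy)
    refine mem_X.2 ⟨?_, hx'.2⟩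
    rw [lt_iff] at hxy
    omega

theorem sum_tau_of_expansion {r n d s : ℕ} {m : ℕ → ℕ} {L : Finset Mono} (hn : 1 ≤ n)
    (hd : d ≠ 0) (hL : Init (X r n d) L) (h : IsBinomialExpansion n d L.card s m) :
    (U n L).card = m (d+1) * Nat.choose (n + d) (d+1) +
      ∑ i ∈ Finset.Icc s d, Nat.choose (m i + 1) (i+1) := by
  classical
  obtain ⟨h1, h2, -, -, h5, h6⟩ := h
  set q := m (d+1) with hq
  obtain ⟨Y, hY, hYc, hYt⟩ := exists_block q n s m h1 d 0 h2 (fun hs => by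
    obtain ⟨a1, a2⟩ := h5 hs
    exact ⟨by omega, a2⟩)
  have hdisj : Disjoint (X q n d) Y := by
    rw [Finset.disjoint_left]
    intro p hp hp'
    have e1 := (mem_X.1 hp).1
    have e2 := (mem_Z.1 (hY.1 hp')).1
    omega
  have hI : Init (X (q+1) n d) (X q n d ∪ Y) := by
    refine ⟨fun p hp => ?_, fun y hy x hx hxy => ?_⟩
    · rw [mem_X]
      rcases Finset.mem_union.1 hp with hp | hp
      · have := mem_X.1 hp
        exact ⟨by omega, this.2⟩
      · have := mem_Z.1 (hY.1 hp)
        exact ⟨by omega, this.2.2.1, this.2.2.2⟩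
    · have hx' := mem_X.1 hx
      by_cases hxc : x.c < q
      · exact Finset.mem_union_left _ (mem_X.2 ⟨hxc, hx'.2⟩)
      · rcases Finset.mem_union.1 hy with hp | hp
        · have := (mem_X.1 hp).1
          rw [lt_iff] at hxy
          omega
        · apply Finset.mem_union_right
          exact hY.2 y hp x (mem_Z.2 ⟨by omega, fun i hi => by omega, hx'.2.1, hx'.2.2⟩) hxy
  have hcard : (X q n d ∪ Y).card = L.card := by
    rw [Finset.card_union_of_disjoint hdisj, card_X, hYc, h6, Nat.multichoose_eq,
      show n + d - 1 = n - 1 + d by omega]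
  have e1 := hL.mono (le_max_left r (q+1))
  have e2 := hI.mono (le_max_right r (q+1))
  have heq : L = X q n d ∪ Y := Finset.Subset.antisymm
    (e1.subset_of_card_le e2 hcard.ge) (e2.subset_of_card_le e1 hcard.le)
  rw [card_U, heq, Finset.sum_union hdisj, sum_tau_X, hYt, Nat.multichoose_eq]
  rfl

theorem card_U_eq {r n d : ℕ} {L : Finset Mono} (hn : 1 ≤ n) (hL : Init (X r n d) L) :
    (U n L).card = macaulayPow n d L.card := by
  unfold macaulayPow
  split_ifs with h1 h2 h3
  · rw [Finset.card_eq_zero] at h1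
    simp [h1, U]
  · subst h2
    rw [card_U, Finset.sum_congr rfl (g := fun _ => n)]
    · simp [mul_comm]
    · intro w hw
      have hw := (mem_X.1 (hL.1 hw)).2.2
      rw [Finsupp.degree_eq_zero_iff] at hw
      have : tauSet n w = Finset.range n := by
        ext j
        rw [mem_tauSet, Finset.mem_range]
        refine and_iff_left_of_imp fun _ i _ => by simp [hw]
      rw [this, Finset.card_range]
  · exact sum_tau_of_expansion hn h2 hL h3.choose_spec
  · exact absurd (exists_expansion n d L.card hn h2) h3

theorem macaulay {r n d : ℕ} (hn : 1 ≤ n) {A' A : Finset Mono} (hA' : A' ⊆ X r n (d+1))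
    (hA : A ⊆ X r n d) (hcl : Closed n A' A) : A'.card ≤ macaulayPow n d A.card := by
  obtain ⟨k, rfl⟩ : ∃ k, n = k + 1 := ⟨n - 1, by omega⟩
  obtain ⟨L, hL, hc⟩ := exists_init (X r (k+1) d) A.card (Finset.card_le_card hA)
  rw [← hc, ← card_U_eq hn hL]
  exact card_le_card_U hA' hA hcl hL hc

/-- The lexicographic construction. -/
theorem exists_lex {n : ℕ} (hn : 1 ≤ n) {h : ℕ → ℕ}
    (hh : ∀ j, h (j+1) ≤ macaulayPow n j (h j)) :
    ∃ L : ℕ → Finset Mono, (∀ j, L j ⊆ X (h 0) n j) ∧ (∀ j, (L j).card = h j) ∧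
      ∀ j, Closed n (L (j+1)) (L j) := by
  have hle : ∀ j, h j ≤ (X (h 0) n j).card := by
    intro j
    induction j with
    | zero => rw [card_X]; simp
    | succ j ih =>
      obtain ⟨L, hL, hc⟩ := exists_init _ _ ih
      have := hh j
      rw [← hc, ← card_U_eq hn hL] at this
      exact this.trans (Finset.card_le_card (U_subset hL.1))
  choose L hL hc using fun j => exists_init _ _ (hle j)
  refine ⟨L, fun j => (hL j).1, hc, fun j => ?_⟩
  apply closed_of_card_le (hL j) (hL (j+1))
  rw [card_U_eq hn (hL j), hc, hc]
  exact hh j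

end Mono


namespace Mono

open Classical in
theorem card_filter_eq_finrank {K M : Type*} [Field K] [AddCommGroup M] [Module K M]
    {ι : Type*} [LinearOrder ι] (v : ι → M) (s : Finset ι) :
    (s.filter (fun p => v p ∉ Submodule.span K (v '' {q | q ∈ s ∧ q < p}))).card
      = Module.finrank K (Submodule.span K (v '' (s : Set ι))) := by
  induction s using Finset.induction_on_max with
  | empty =>
    rw [Finset.coe_empty, Set.image_empty, Submodule.span_empty, finrank_bot]
    simp
  | insert a s ha ih =>
    have has : a ∉ s := fun h => lt_irrefl _ (ha a h)
    have h1 : {q | q ∈ insert a s ∧ q < a} = (s : Set ι) := by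
      ext q
      simp only [Finset.mem_insert, Set.mem_ofPred_eq, Finset.mem_coe]
      constructor
      · rintro ⟨rfl | h, h'⟩
        · exact absurd h' (lt_irrefl _)
        · exact h
      · intro h; exact ⟨Or.inr h, ha q h⟩
    have h2 : s.filter (fun p => v p ∉ Submodule.span K (v '' {q | q ∈ insert a s ∧ q < p}))
        = s.filter (fun p => v p ∉ Submodule.span K (v '' {q | q ∈ s ∧ q < p})) := by
      apply Finset.filter_congr
      intro p hp
      have : {q | q ∈ insert a s ∧ q < p} = {q | q ∈ s ∧ q < p} := by
        ext q
        simp only [Finset.mem_insert, Set.mem_ofPred_eq]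
        constructor
        · rintro ⟨rfl | h, h'⟩
          · exact absurd h' (lt_asymm (ha p hp))
          · exact ⟨h, h'⟩
        · rintro ⟨h, h'⟩; exact ⟨Or.inr h, h'⟩
      rw [this]
    rw [Finset.filter_insert, h1, h2, Finset.coe_insert, Set.image_insert_eq]
    by_cases hv : v a ∈ Submodule.span K (v '' (s : Set ι))
    · rw [if_neg (not_not.2 hv), ih, Submodule.span_insert_eq_span hv]
    · rw [if_pos hv, Finset.card_insert_of_notMem (by simp [has]), ih]
      have : Module.Finite K (Submodule.span K (v '' (s : Set ι))) :=
        FiniteDimensional.span_of_finite K ((s.finite_toSet).image v)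
      have hd : Module.finrank K (Submodule.span K {v a}) = 1 := by
        apply finrank_span_singleton
        rintro h0
        exact hv (h0 ▸ Submodule.zero_mem _)
      have h3 := Submodule.finrank_sup_add_finrank_inf_eq (Submodule.span K {v a})
        (Submodule.span K (v '' (s : Set ι)))
      have h4 : Submodule.span K {v a} ⊓ Submodule.span K (v '' (s : Set ι)) = ⊥ := by
        rw [eq_bot_iff]
        rintro x ⟨hx1, hx2⟩
        obtain ⟨c, rfl⟩ := Submodule.mem_span_singleton.1 hx1
        by_cases hc : c = 0
        · simp [hc]
        · exact absurd ((Submodule.smul_mem_iff _ hc).1 hx2) hv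
      rw [h4, finrank_bot, hd] at h3
      rw [Submodule.span_insert]
      omega

section forward

variable {K : Type*} [Field K] {n : ℕ} {M : Type*} [AddCommGroup M] [Module K M]
  [Module (MvPolynomial (Fin n) K) M] [IsScalarTower K (MvPolynomial (Fin n) K) M]

/-- exponent vector in `Fin n` variables -/
noncomputable def ex (n : ℕ) (e : ℕ →₀ ℕ) : Fin n →₀ ℕ :=
  Finsupp.comapDomain Fin.val e Fin.val_injective.injOn

variable (K n) in
/-- value of a monomial in a module -/
noncomputable def vv (e : ℕ → M) (p : Mono) : M :=
  MvPolynomial.monomial (ex n p.e) (1 : K) • e p.c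

theorem ex_mul (i : Fin n) (p : Mono) : ex n (mul i p).e = ex n p.e + Finsupp.single i 1 := by
  ext j
  simp [ex, Finsupp.comapDomain_apply, Finsupp.single_apply, Fin.ext_iff]

theorem vv_mul (e : ℕ → M) (i : Fin n) (p : Mono) :
    vv K n e (mul i p) = (MvPolynomial.X i : MvPolynomial (Fin n) K) • vv K n e p := by
  rw [vv, vv, ex_mul, smul_smul, MvPolynomial.X, MvPolynomial.monomial_mul, mul_c, mul_one,
    add_comm]

theorem X_smul_span (e : ℕ → M) (i : Fin n) (s t : Set Mono) (hst : ∀ q ∈ s, mul i q ∈ t)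
    {x : M} (hx : x ∈ Submodule.span K (vv K n e '' s)) :
    (MvPolynomial.X i : MvPolynomial (Fin n) K) • x ∈ Submodule.span K (vv K n e '' t) := by
  induction hx using Submodule.span_induction with
  | mem x h =>
    obtain ⟨q, hq, rfl⟩ := h
    rw [← vv_mul]
    exact Submodule.subset_span ⟨_, hst q hq, rfl⟩
  | zero => simp
  | add x y _ _ h1 h2 => rw [smul_add]; exact add_mem h1 h2
  | smul a x _ h1 => rw [smul_comm]; exact Submodule.smul_mem _ _ h1

theorem forward (hn : 1 ≤ n) (ℳ : ℕ → Submodule K M) (hI : DirectSum.IsInternal ℳ)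
    (hg : ∀ (i j : ℕ) (p : MvPolynomial (Fin n) K),
          p ∈ MvPolynomial.homogeneousSubmodule (Fin n) K i →
            ∀ x ∈ ℳ j, p • x ∈ ℳ (i + j))
    (hfin : Module.Finite (MvPolynomial (Fin n) K) M)
    (hspan : Submodule.span (MvPolynomial (Fin n) K) ((ℳ 0 : Submodule K M) : Set M) = ⊤)
    (j : ℕ) : Module.finrank K (ℳ (j+1)) ≤ macaulayPow n j (Module.finrank K (ℳ j)) := by
  classical
  obtain ⟨t, ht, hts⟩ : ∃ t : Finset M, (t : Set M) ⊆ ℳ 0 ∧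
      Submodule.span (MvPolynomial (Fin n) K) (t : Set M) = ⊤ := by
    have := (Submodule.fg_span_iff_fg_span_finset_subset
      (R := MvPolynomial (Fin n) K) ((ℳ 0 : Submodule K M) : Set M)).1
      (by rw [hspan]; exact hfin.fg_top)
    obtain ⟨t, h1, h2⟩ := this
    exact ⟨t, h1, by rw [← h2, hspan]⟩
  set r := t.card with hr
  set e : ℕ → M := fun c => t.toList.getD c 0 with he
  have he0 : ∀ c, e c ∈ ℳ 0 := by
    intro c
    by_cases hc : c < t.toList.length
    · have : e c = t.toList[c] := List.getD_eq_getElem _ _ hc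
      rw [this]
      exact ht (Finset.mem_toList.1 (List.getElem_mem hc))
    · have : e c = 0 := by simp only [he]; exact List.getD_eq_default _ _ (not_lt.1 hc)
      rw [this]; exact zero_mem _
  have het : ∀ x ∈ t, ∃ c < r, e c = x := by
    intro x hx
    obtain ⟨c, hc, h⟩ := List.getElem_of_mem (Finset.mem_toList.2 hx)
    refine ⟨c, by simpa [hr] using hc, ?_⟩
    exact (List.getD_eq_getElem _ _ hc).trans h
  set N : ℕ → Submodule K M := fun j => Submodule.span K (vv K n e '' (X r n j : Set Mono)) with hN
  have hdeg : ∀ j, ∀ p ∈ X r n j, (ex n p.e).degree = j := by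
    intro j
    induction j with
    | zero =>
      intro p hp
      have := ((mem_X).1 hp).2.2
      rw [Finsupp.degree_eq_zero_iff] at this
      simp [this, ex, Finsupp.comapDomain]
      rfl
    | succ j ih =>
      intro p hp
      obtain ⟨h1, h2, h3⟩ := mem_X.1 hp
      obtain ⟨i, hi⟩ : ∃ i, p.e i ≠ 0 := by
        by_contra hc
        push Not at hc
        have : p.e = 0 := by ext i; simp [hc i]
        simp [this] at h3
      have hin : i < n := by
        by_contra hc; exact hi (h2 i (not_lt.1 hc))
      obtain ⟨q, rfl⟩ := exists_mul (Nat.pos_of_ne_zero hi)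
      have := ih q ((mul_mem_X hin).1 hp)
      have hm := ex_mul ⟨i, hin⟩ q
      simp only at hm
      rw [hm]; simp [this]
  have hNle : ∀ j, N j ≤ ℳ j := by
    intro j
    rw [hN]
    refine Submodule.span_le.2 ?_
    rintro _ ⟨p, hp, rfl⟩
    have := hg j 0 (MvPolynomial.monomial (ex n p.e) (1 : K))
      (by
        rw [MvPolynomial.mem_homogeneousSubmodule]
        exact MvPolynomial.isHomogeneous_monomial _ (hdeg j p hp)) (e p.c) (he0 _)
    simpa [vv] using this
  have hXN : ∀ (i : Fin n) (x : M), x ∈ ⨆ j, N j →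
      (MvPolynomial.X i : MvPolynomial (Fin n) K) • x ∈ ⨆ j, N j := by
    intro i x hx
    induction hx using Submodule.iSup_induction' with
    | mem j x hx =>
      exact Submodule.mem_iSup_of_mem (j+1)
        (X_smul_span e i _ _ (fun q hq => (mul_mem_X i.2).2 hq) hx)
    | zero => simp
    | add x y _ _ h1 h2 => rw [smul_add]; exact add_mem h1 h2
  have hpN : ∀ (p : MvPolynomial (Fin n) K) (x : M), x ∈ ⨆ j, N j → p • x ∈ ⨆ j, N j := by
    intro p
    induction p using MvPolynomial.induction_on with
    | C a =>
      intro x hx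
      have : (MvPolynomial.C a : MvPolynomial (Fin n) K) • x = a • x := by
        rw [← MvPolynomial.algebraMap_eq, algebraMap_smul]
      rw [this]; exact Submodule.smul_mem _ _ hx
    | add p q h1 h2 => intro x hx; rw [add_smul]; exact add_mem (h1 x hx) (h2 x hx)
    | mul_X p i h => intro x hx; rw [mul_smul]; exact h _ (hXN i x hx)
  have hNtop : ⨆ j, N j = ⊤ := by
    rw [eq_top_iff]
    intro x _
    have hx : x ∈ Submodule.span (MvPolynomial (Fin n) K) (t : Set M) := by rw [hts]; trivial
    induction hx using Submodule.span_induction with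
    | mem x hx =>
      obtain ⟨c, hc, rfl⟩ := het x hx
      refine Submodule.mem_iSup_of_mem 0 (Submodule.subset_span ⟨⟨c, 0⟩, ?_, ?_⟩)
      · exact mem_X.2 ⟨hc, by simp, by simp⟩
      · have : ex n 0 = 0 := by ext; simp [ex]
        simp [vv, this]
    | zero => simp
    | add x y _ _ h1 h2 => exact add_mem (h1 trivial) (h2 trivial)
    | smul a x _ h1 => exact hpN _ _ (h1 trivial)
  have hind := ((DirectSum.isInternal_submodule_iff_iSupIndep_and_iSup_eq_top ℳ).1 hI).1
  have hNM : ∀ j, N j = ℳ j := by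
    intro j
    apply le_antisymm (hNle j)
    have h1 : (⊤ : Submodule K M) ≤ N j ⊔ ⨆ (i) (_ : i ≠ j), ℳ i := by
      rw [← hNtop]
      refine iSup_le fun i => ?_
      by_cases hij : i = j
      · subst hij; exact le_sup_left
      · exact le_sup_of_le_right (le_iSup₂_of_le i hij (hNle i))
    have h2 := sup_inf_assoc_of_le (⨆ (i) (_ : i ≠ j), ℳ i) (hNle j)
    rw [top_le_iff.1 h1, top_inf_eq, inf_comm, (hind j).eq_bot, sup_bot_eq] at h2
    exact h2.le
  set A : ℕ → Finset Mono := fun j => (X r n j).filter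
    (fun p => vv K n e p ∉ Submodule.span K (vv K n e '' {q | q ∈ X r n j ∧ q < p})) with hA
  have hcard : ∀ j, (A j).card = Module.finrank K (ℳ j) := by
    intro j
    rw [← hNM j]
    exact card_filter_eq_finrank (K := K) (vv K n e) (X r n j)
  rw [← hcard, ← hcard]
  refine macaulay hn (Finset.filter_subset _ _) (Finset.filter_subset _ _) ?_
  intro q i hi hq
  simp only [hA, Finset.mem_filter] at hq ⊢
  refine ⟨(mul_mem_X hi).1 hq.1, fun hc => hq.2 ?_⟩
  have := vv_mul (K := K) e ⟨i, hi⟩ q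
  simp only at this
  rw [this]
  refine X_smul_span e ⟨i, hi⟩ _ _ ?_ hc
  rintro q' ⟨h1, h2⟩
  exact ⟨(mul_mem_X hi).2 h1, mul_lt h2⟩

end forward

end Mono


namespace Mono

section backward

theorem ex_injOn {n : ℕ} {p q : Mono} (hc : p.c = q.c) (hp : ∀ i, n ≤ i → p.e i = 0)
    (hq : ∀ i, n ≤ i → q.e i = 0) (h : ex n p.e = ex n q.e) : p = q := by
  ext i
  · exact hc
  · by_cases hi : i < n
    · have := DFunLike.congr_fun h ⟨i, hi⟩
      simpa [ex, Finsupp.comapDomain_apply] using this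
    · rw [hp i (not_lt.1 hi), hq i (not_lt.1 hi)]

variable {K : Type} [Field K] {n : ℕ}

/-- the relation submodule -/
noncomputable def rel (K : Type) [Field K] (n r : ℕ) (L : ℕ → Finset Mono)
    (hL : ∀ j, Closed n (L (j+1)) (L j)) :
    Submodule (MvPolynomial (Fin n) K) (Fin r → MvPolynomial (Fin n) K) where
  carrier := {f | ∀ (k : Fin r) (p : Mono), p.c = k → p ∈ L p.e.degree →
    MvPolynomial.coeff (ex n p.e) (f k) = 0}
  add_mem' := by
    intro f g hf hg k p hk hp
    simp [hf k p hk hp, hg k p hk hp]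
  zero_mem' := by
    intro k p hk hp
    simp
  smul_mem' := by
    intro a
    induction a using MvPolynomial.induction_on with
    | C a =>
      intro f hf k p hk hp
      simp [MvPolynomial.coeff_C_mul, hf k p hk hp]
    | add a b ha hb =>
      intro f hf k p hk hp
      have h1 := ha hf k p hk hp
      have h2 := hb hf k p hk hp
      simp only [Pi.smul_apply, smul_eq_mul] at h1 h2 ⊢
      rw [add_mul, MvPolynomial.coeff_add, h1, h2, add_zero]
    | mul_X a i ha =>
      intro f hf
      rw [mul_smul]
      apply ha
      intro k p hk hp
      simp only [Pi.smul_apply, smul_eq_mul]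
      rw [mul_comm, MvPolynomial.coeff_mul_X']
      split_ifs with hi
      · have hpos : 0 < p.e i := by
          have := Finsupp.mem_support_iff.1 hi
          simpa [ex, Finsupp.comapDomain_apply, Nat.pos_iff_ne_zero] using this
        obtain ⟨q, rfl⟩ := exists_mul hpos
        rw [ex_mul, add_tsub_cancel_right]
        refine hf k q hk ?_
        rw [mul_degree] at hp
        exact hL _ q i i.2 hp
      · rfl

theorem mem_rel {r : ℕ} {L : ℕ → Finset Mono} {hL : ∀ j, Closed n (L (j+1)) (L j)}
    {f : Fin r → MvPolynomial (Fin n) K} : f ∈ rel K n r L hL ↔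
    ∀ (k : Fin r) (p : Mono), p.c = k → p ∈ L p.e.degree →
    MvPolynomial.coeff (ex n p.e) (f k) = 0 := Iff.rfl

theorem smul_iSup {M : Type*} [AddCommGroup M] [Module K M]
    [Module (MvPolynomial (Fin n) K) M] [IsScalarTower K (MvPolynomial (Fin n) K) M]
    (e : ℕ → M) (r : ℕ) (p : MvPolynomial (Fin n) K) (x : M)
    (hx : x ∈ ⨆ j, Submodule.span K (vv K n e '' (X r n j : Set Mono))) :
    p • x ∈ ⨆ j, Submodule.span K (vv K n e '' (X r n j : Set Mono)) := by
  induction p using MvPolynomial.induction_on generalizing x with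
  | C a =>
    have : (MvPolynomial.C a : MvPolynomial (Fin n) K) • x = a • x := by
      rw [← MvPolynomial.algebraMap_eq, algebraMap_smul]
    rw [this]; exact Submodule.smul_mem _ _ hx
  | add p q h1 h2 => rw [add_smul]; exact add_mem (h1 x hx) (h2 x hx)
  | mul_X p i h =>
    rw [mul_smul]
    refine h _ ?_
    clear h
    induction hx using Submodule.iSup_induction' with
    | mem j x hx =>
      exact Submodule.mem_iSup_of_mem (j+1)
        (X_smul_span e i _ _ (fun q hq => (mul_mem_X i.2).2 hq) hx)
    | zero => simp
    | add x y _ _ h1 h2 => rw [smul_add]; exact add_mem h1 h2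

theorem smul_grade {M : Type*} [AddCommGroup M] [Module K M]
    [Module (MvPolynomial (Fin n) K) M] [IsScalarTower K (MvPolynomial (Fin n) K) M]
    (e : ℕ → M) (r : ℕ) (i j : ℕ) (p : MvPolynomial (Fin n) K)
    (hp : p ∈ MvPolynomial.homogeneousSubmodule (Fin n) K i) (x : M)
    (hx : x ∈ Submodule.span K (vv K n e '' (X r n j : Set Mono))) :
    p • x ∈ Submodule.span K (vv K n e '' (X r n (i + j) : Set Mono)) := by
  have key : ∀ (i : ℕ) (m : Fin n →₀ ℕ), m.degree = i →
      MvPolynomial.monomial m (1 : K) • x ∈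
        Submodule.span K (vv K n e '' (X r n (i + j) : Set Mono)) := by
    intro i
    induction i with
    | zero =>
      intro m hm
      rw [Finsupp.degree_eq_zero_iff] at hm
      subst hm
      have : MvPolynomial.monomial (0 : Fin n →₀ ℕ) (1 : K) = 1 := rfl
      rw [this, one_smul, zero_add]
      exact hx
    | succ i ih =>
      intro m hm
      obtain ⟨k, hk⟩ : ∃ k, m k ≠ 0 := by
        by_contra hc
        push Not at hc
        have : m = 0 := by ext i; simp [hc i]
        simp [this] at hm
      have hle : Finsupp.single k 1 ≤ m := by
        rw [Finsupp.single_le_iff]; omega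
      obtain ⟨m', rfl⟩ := exists_add_of_le hle
      have h1 := ih m' (by simp at hm; omega)
      have h2 : MvPolynomial.monomial (Finsupp.single k 1 + m') (1 : K)
          = MvPolynomial.X k * MvPolynomial.monomial m' 1 := by
        rw [MvPolynomial.X, MvPolynomial.monomial_mul, mul_one]
      rw [h2, mul_smul]
      refine X_smul_span e k _ _ (fun q hq => ?_) h1
      have := (mul_mem_X (r := r) k.2).2 hq
      rwa [show i + 1 + j = i + j + 1 by omega]
  rw [MvPolynomial.mem_homogeneousSubmodule] at hp
  rw [MvPolynomial.as_sum p, Finset.sum_smul]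
  refine sum_mem fun m hm => ?_
  have hd : m.degree = i := by
    by_contra hne
    exact MvPolynomial.mem_support_iff.1 hm (hp.coeff_eq_zero hne)
  have : MvPolynomial.monomial m (MvPolynomial.coeff m p)
      = (MvPolynomial.coeff m p) • MvPolynomial.monomial m (1 : K) := by
    rw [MvPolynomial.smul_monomial, smul_eq_mul, mul_one]
  rw [this, smul_assoc]
  exact Submodule.smul_mem _ _ (key i m hd)

theorem backward (hn : 1 ≤ n) (h : ℕ → ℕ) (hh : ∀ j : ℕ, h (j + 1) ≤ macaulayPow n j (h j)) :
    ∃ (M : Type) (_ : AddCommGroup M) (_ : Module K M)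
        (_ : Module (MvPolynomial (Fin n) K) M)
        (_ : IsScalarTower K (MvPolynomial (Fin n) K) M)
        (ℳ : ℕ → Submodule K M),
      DirectSum.IsInternal ℳ ∧
      (∀ (i j : ℕ) (p : MvPolynomial (Fin n) K),
          p ∈ MvPolynomial.homogeneousSubmodule (Fin n) K i →
            ∀ x ∈ ℳ j, p • x ∈ ℳ (i + j)) ∧
      Module.Finite (MvPolynomial (Fin n) K) M ∧
      Submodule.span (MvPolynomial (Fin n) K) ((ℳ 0 : Submodule K M) : Set M) = ⊤ ∧
      (∀ j : ℕ, Module.finrank K (ℳ j) = h j) := by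
  classical
  obtain ⟨L, hLX, hLc, hL⟩ := exists_lex hn hh
  set r := h 0 with hr
  set N := rel K n r L hL with hN
  set f : ℕ → (Fin r → MvPolynomial (Fin n) K) :=
    fun c => fun k => if c = k then 1 else 0 with hf
  set e : ℕ → (Fin r → MvPolynomial (Fin n) K) ⧸ N := fun c => N.mkQ (f c) with he
  have hvv : ∀ p, vv K n e p = N.mkQ (MvPolynomial.monomial (ex n p.e) (1 : K) • f p.c) := by
    intro p; rw [vv, he, map_smul]
  have hcoeff : ∀ (p q : Mono) (k : Fin r), p.c = k →
      (∀ i, n ≤ i → p.e i = 0) → (∀ i, n ≤ i → q.e i = 0) →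
      MvPolynomial.coeff (ex n p.e) ((MvPolynomial.monomial (ex n q.e) (1 : K) • f q.c) k)
        = if q = p then 1 else 0 := by
    intro p q k hk hp hq
    simp only [Pi.smul_apply, hf, smul_eq_mul, mul_ite, mul_one, mul_zero]
    by_cases hqc : q.c = k
    · rw [if_pos hqc, MvPolynomial.coeff_monomial]
      by_cases hqp : q = p
      · simp [hqp]
      · rw [if_neg hqp, if_neg]
        intro hc
        exact hqp (ex_injOn (hqc.trans hk.symm) hq hp hc)
    · rw [if_neg hqc, if_neg]
      · simp
      · rintro rfl; exact hqc hk
  have hLd : ∀ j, ∀ p ∈ L j, p.e.degree = j := fun j p hp => (mem_X.1 (hLX j hp)).2.2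
  have hzero : ∀ j, ∀ p ∈ X r n j, p ∉ L j → vv K n e p = 0 := by
    intro j p hp hpL
    rw [hvv, Submodule.mkQ_apply, Submodule.Quotient.mk_eq_zero, hN, mem_rel]
    intro k q hk hq
    rw [hcoeff q p k hk (mem_X.1 (hLX _ hq)).2.1 (mem_X.1 hp).2.1, if_neg]
    rintro rfl
    apply hpL
    rwa [(mem_X.1 hp).2.2] at hq
  set b : {p : Mono // p ∈ L p.e.degree} → (Fin r → MvPolynomial (Fin n) K) ⧸ N :=
    fun p => vv K n e p.1 with hb
  have hbind : LinearIndependent K b := by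
    rw [linearIndependent_iff']
    intro s g hg p hps
    have h1 : N.mkQ (∑ q ∈ s, g q • (MvPolynomial.monomial (ex n q.1.e) (1 : K) • f q.1.c)) = 0 := by
      rw [map_sum, ← hg]
      refine Finset.sum_congr rfl fun q _ => ?_
      rw [hb]
      simp only [hvv]
      rfl
    rw [Submodule.mkQ_apply, Submodule.Quotient.mk_eq_zero, hN, mem_rel] at h1
    have hpX := mem_X.1 (hLX _ p.2)
    have h2 := h1 ⟨p.1.c, hpX.1⟩ p.1 rfl p.2
    rw [Finset.sum_apply, MvPolynomial.coeff_sum, Finset.sum_eq_single p] at h2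
    · rw [Pi.smul_apply, MvPolynomial.coeff_smul, hcoeff p.1 p.1 _ rfl hpX.2.1 hpX.2.1] at h2
      simpa using h2
    · intro q _ hqp
      rw [Pi.smul_apply, MvPolynomial.coeff_smul,
        hcoeff p.1 q.1 _ rfl hpX.2.1 (mem_X.1 (hLX _ q.2)).2.1, if_neg, smul_zero]
      exact fun hc => hqp (Subtype.ext hc)
    · exact fun hc => absurd hps hc
  set ℳ : ℕ → Submodule K ((Fin r → MvPolynomial (Fin n) K) ⧸ N) :=
    fun j => Submodule.span K (vv K n e '' (X r n j : Set Mono)) with hM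
  have hMb : ∀ j, ℳ j = Submodule.span K (b '' {p | p.1.e.degree = j}) := by
    intro j
    apply le_antisymm
    · refine Submodule.span_le.2 ?_
      rintro _ ⟨p, hp, rfl⟩
      by_cases hpL : p ∈ L j
      · have hd := hLd j p hpL
        exact Submodule.subset_span ⟨⟨p, by rw [hd]; exact hpL⟩, hd, rfl⟩
      · rw [hzero j p hp hpL]; exact zero_mem _
    · refine Submodule.span_le.2 ?_
      rintro _ ⟨p, hp, rfl⟩
      refine Submodule.subset_span ⟨p.1, ?_, rfl⟩
      have := hLX _ p.2
      rw [show p.1.e.degree = j from hp] at this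
      exact this
  have he0 : ∀ c : Fin r, e c ∈ ℳ 0 := by
    intro c
    refine Submodule.subset_span ⟨⟨c, 0⟩, mem_X.2 ⟨c.2, by simp, by simp⟩, ?_⟩
    have : ex n 0 = 0 := by ext; simp [ex]
    simp [vv, this]
  have hgen : Submodule.span (MvPolynomial (Fin n) K)
      ((ℳ 0 : Submodule K _) : Set ((Fin r → MvPolynomial (Fin n) K) ⧸ N)) = ⊤ := by
    rw [eq_top_iff]
    intro x _
    obtain ⟨g, rfl⟩ := N.mkQ_surjective x
    have : g = ∑ k : Fin r, g k • f k := by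
      ext1 l
      simp [hf, Finset.sum_apply, Fin.val_inj]
    rw [this, map_sum]
    refine sum_mem fun k _ => ?_
    rw [map_smul]
    exact Submodule.smul_mem _ _ (Submodule.subset_span (he0 k))
  have htop : ⨆ j, ℳ j = ⊤ := by
    rw [eq_top_iff]
    intro x _
    have hx : x ∈ Submodule.span (MvPolynomial (Fin n) K)
      ((ℳ 0 : Submodule K _) : Set ((Fin r → MvPolynomial (Fin n) K) ⧸ N)) := by
      rw [hgen]; trivial
    induction hx using Submodule.span_induction with
    | mem x hx => exact Submodule.mem_iSup_of_mem 0 hx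
    | zero => simp
    | add x y _ _ h1 h2 => exact add_mem (h1 trivial) (h2 trivial)
    | smul a x _ h1 => exact smul_iSup e r a x (h1 trivial)
  refine ⟨(Fin r → MvPolynomial (Fin n) K) ⧸ N, inferInstance, inferInstance, inferInstance,
    inferInstance, ℳ, ?_, ?_, inferInstance, hgen, ?_⟩
  · rw [DirectSum.isInternal_submodule_iff_iSupIndep_and_iSup_eq_top]
    refine ⟨fun j => ?_, htop⟩
    have h1 : Disjoint {p : {p : Mono // p ∈ L p.e.degree} | p.1.e.degree = j}
        {p | p.1.e.degree ≠ j} := by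
      rw [Set.disjoint_left]
      intro p h1 h2
      exact h2 h1
    have h2 := hbind.disjoint_span_image h1
    rw [hMb j]
    refine h2.mono_right (iSup₂_le fun i hi => ?_)
    rw [hMb i]
    refine Submodule.span_mono (Set.image_mono ?_)
    intro p hp hc
    exact hi ((show p.1.e.degree = i from hp).symm.trans hc)
  · exact fun i j p hp x hx => smul_grade e r i j p hp x hx
  · intro j
    rw [hMb j, ← hLc j]
    set ι : L j → {p : Mono // p ∈ L p.e.degree} :=
      fun p => ⟨p.1, by rw [hLd j p.1 p.2]; exact p.2⟩ with hι
    have hinj : Function.Injective ι := by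
      intro p q hpq
      exact Subtype.ext (congrArg (fun x => x.1) hpq)
    have h1 : b '' {p | p.1.e.degree = j} = Set.range (b ∘ ι) := by
      ext x
      constructor
      · rintro ⟨p, hp, rfl⟩
        refine ⟨⟨p.1, ?_⟩, rfl⟩
        have := p.2
        rwa [show p.1.e.degree = j from hp] at this
      · rintro ⟨p, rfl⟩
        exact ⟨ι p, hLd j p.1 p.2, rfl⟩
    rw [h1, finrank_span_eq_card (hbind.comp ι hinj)]
    simp

end backward

end Mono

/-- Hulett / Blancafort–Elias: a numerical function `h : ℕ → ℕ` is
the Hilbert function of a finitely generated ℕ-graded module over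
`S = K[x_1,…,x_n]` generated in degree zero if and only if
`h(j+1) ≤ h(j)^{⟨j⟩}` for all `j ≥ 0`. -/
theorem hilbert_function_of_module_generated_in_degree_zero_iff
    (K : Type) [Field K] (n : ℕ) (hn : 1 ≤ n) (h : ℕ → ℕ) :
    (∃ (M : Type) (_ : AddCommGroup M) (_ : Module K M)
        (_ : Module (MvPolynomial (Fin n) K) M)
        (_ : IsScalarTower K (MvPolynomial (Fin n) K) M)
        (ℳ : ℕ → Submodule K M),
      DirectSum.IsInternal ℳ ∧
      (∀ (i j : ℕ) (p : MvPolynomial (Fin n) K),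
          p ∈ MvPolynomial.homogeneousSubmodule (Fin n) K i →
            ∀ x ∈ ℳ j, p • x ∈ ℳ (i + j)) ∧
      Module.Finite (MvPolynomial (Fin n) K) M ∧
      Submodule.span (MvPolynomial (Fin n) K) ((ℳ 0 : Submodule K M) : Set M) = ⊤ ∧
      (∀ j : ℕ, Module.finrank K (ℳ j) = h j)) ↔
    (∀ j : ℕ, h (j + 1) ≤ macaulayPow n j (h j)) := by
  constructor
  · rintro ⟨M, i1, i2, i3, i4, ℳ, hI, hg, hfin, hspan, hh⟩ j
    rw [← hh, ← hh]
    exact Mono.forward hn ℳ hI hg hfin hspan j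
  · intro hh
    exact Mono.backward hn h hh
end
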